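/- Let (T, m) be a complete local equidimensional ring such that dim T ≥ 2 and depth T > 1. Suppose that no integer of T is a zerodivisor in T and that |T| = |T/m|. Let d and t be integers such that 1 ≤ d ≤ dim T − 1, 0 ≤ t ≤ dim T − 1, and d − 1 ≤ t. Assume that for every p ∈ Ass T, ht p ≤ d − 1, and that if z is a regular element of T and Q ∈ Ass(T/zT), then ht Q ≤ d. Then there exists a local unique factorization domain A such that the completion of A is T, α(A,(0)) = t, and α(A,p) = d − 1 for every height one prime ideal p of A. -/

import Mathlib

universe u

open IsLocalRing Cardinal

/-- The height of an ideal: infimum of heights of primes containing it. -/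
noncomputable def idealHt {T : Type*} [CommRing T] (I : Ideal T) : ℕ∞ :=
  ⨅ (p : PrimeSpectrum T) (_ : I ≤ p.asIdeal), Order.height p

/-- `T` is equidimensional: `dim (T/p) = dim T` for every minimal prime `p`. -/
def IsEquidim (T : Type*) [CommRing T] : Prop :=
  ∀ p ∈ minimalPrimes T, ringKrullDim (T ⧸ p) = ringKrullDim T

/-- `depth T > 1`: there is a regular sequence of length two inside the maximal ideal. -/
def DepthGTOne (T : Type*) [CommRing T] [IsLocalRing T] : Prop :=
  ∃ x y : T, x ∈ maximalIdeal T ∧ y ∈ maximalIdeal T ∧ x ∈ nonZeroDivisors T ∧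
    Ideal.Quotient.mk (Ideal.span {x}) y ∈ nonZeroDivisors (T ⧸ Ideal.span {x})

/-- A local (Noetherian) unique factorization domain `A` together with an identification
of its `maximalIdeal A`-adic completion with `T`. -/
structure LocalUFDWithCompletion (T : Type u) [CommRing T] : Type (u + 1) where
  /-- the underlying ring -/
  A : Type u
  [commRing : CommRing A]
  [isDomain : IsDomain A]
  [isNoetherian : IsNoetherianRing A]
  [isLocalRing : IsLocalRing A]
  [ufd : UniqueFactorizationMonoid A]
  /-- the natural map from `A` to its completion `T` -/
  toCompletion : A →+* T
  /-- the completion of `A` is `T` -/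
  completionEquiv : AdicCompletion (IsLocalRing.maximalIdeal A) A ≃+* T
  completionEquiv_comp : ∀ a : A,
    completionEquiv (algebraMap A (AdicCompletion (IsLocalRing.maximalIdeal A) A) a) =
      toCompletion a

attribute [instance] LocalUFDWithCompletion.commRing LocalUFDWithCompletion.isDomain
  LocalUFDWithCompletion.isNoetherian LocalUFDWithCompletion.isLocalRing
  LocalUFDWithCompletion.ufd

/-- `α(A, p)`: the Krull dimension of the formal fiber ring `T ⊗_A κ(p)` of `A` at the
prime ideal `p`, where `κ(p) = A_p / p A_p` and `T` is the completion of `A`. -/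
noncomputable def alphaAt {T : Type u} [CommRing T] (X : LocalUFDWithCompletion T)
    (p : Ideal X.A) (hp : p.IsPrime) : WithBot ℕ∞ :=
  letI := X.toCompletion.toAlgebra
  haveI := hp
  ringKrullDim (TensorProduct X.A T
    (Localization.AtPrime p ⧸ IsLocalRing.maximalIdeal (Localization.AtPrime p)))


section

section Avoid
variable {T : Type u} [CommRing T] [IsLocalRing T]

/-- a set-theoretic section of the residue map -/
noncomputable def resSec (T : Type u) [CommRing T] [IsLocalRing T] : ResidueField T → T :=
  Function.surjInv (residue_surjective (R := T))

lemma resSec_sub_isUnit {k k' : ResidueField T} (h : k ≠ k') :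
    IsUnit (resSec T k - resSec T k') := by
  by_contra hu
  have h1 : resSec T k - resSec T k' ∈ maximalIdeal T := hu
  rw [← residue_eq_zero_iff, map_sub, sub_eq_zero] at h1
  apply h
  have e : ∀ k, residue T (resSec T k) = k := Function.surjInv_eq residue_surjective
  rwa [e, e] at h1

lemma avoid_list (C : Set (Ideal T)) (hC : #C < #(ResidueField T)) (l : List T) :
    ∃ w ∈ Ideal.span {a | a ∈ l}, ∀ P ∈ C, (∃ a ∈ l, a ∉ P) → w ∉ P := by
  induction l with
  | nil => exact ⟨0, by simp, by simp⟩
  | cons a l ih =>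
    obtain ⟨w, hw, hwP⟩ := ih
    have hex : ∃ k : ResidueField T, ∀ P ∈ C, (∃ b ∈ a :: l, b ∉ P) → w + resSec T k * a ∉ P := by
      by_contra hcon
      push Not at hcon
      choose P hPC hne hmem using hcon
      refine absurd hC (not_lt.2 ?_)
      refine Cardinal.mk_le_of_injective (f := fun k => (⟨P k, hPC k⟩ : C)) ?_
      intro k k' hkk
      by_contra hne'
      have hPP : P k = P k' := by simpa using hkk
      have h1 := hmem k
      have h2 := hmem k'
      rw [← hPP] at h2
      have h3 : (resSec T k - resSec T k') * a ∈ P k := by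
        have := (P k).sub_mem h1 h2
        convert this using 1; ring
      have ha : a ∈ P k := (Ideal.unit_mul_mem_iff_mem _ (resSec_sub_isUnit hne')).1 h3
      have hwk : w ∈ P k := by
        have := (P k).sub_mem h1 ((P k).mul_mem_left (resSec T k) ha)
        simpa using this
      obtain ⟨b, hb, hbP⟩ := hne k
      rcases List.mem_cons.1 hb with rfl | hb
      · exact hbP ha
      · exact hwP _ (hPC k) ⟨b, hb, hbP⟩ hwk
    obtain ⟨k, hk⟩ := hex
    refine ⟨w + resSec T k * a, ?_, hk⟩
    refine Ideal.add_mem _ (Ideal.span_mono (fun x hx => by simp at hx ⊢; exact Or.inr hx) hw)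
      (Ideal.mul_mem_left _ _ (Ideal.subset_span (by simp)))

lemma avoid_ideal [IsNoetherianRing T] (C : Set (Ideal T)) (hC : #C < #(ResidueField T))
    (J : Ideal T) (hJ : ∀ P ∈ C, ¬ J ≤ P) : ∃ w ∈ J, ∀ P ∈ C, w ∉ P := by
  obtain ⟨s, hs⟩ := IsNoetherian.noetherian J
  have hset : {a | a ∈ s.toList} = (s : Set T) := by ext; simp
  obtain ⟨w, hw, hwP⟩ := avoid_list C hC s.toList
  rw [hset] at hw
  have hs' : Ideal.span (s : Set T) = J := hs
  refine ⟨w, hs' ▸ hw, fun P hP => hwP P hP ?_⟩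
  by_contra hcon
  push Not at hcon
  refine hJ P hP ?_
  rw [← hs', Ideal.span_le]
  intro a ha
  exact hcon a (by simpa using ha)

/-- `x` is transcendental over `R` modulo `P`. -/
def TransMod (R : Subring T) (P : Ideal T) (x : T) : Prop :=
  ∀ p : Polynomial R, Polynomial.aeval x p ∈ P → ∀ i, ((p.coeff i : R) : T) ∈ P

lemma exists_transMod (R : Subring T) (C : Set (Ideal T)) (μ : Cardinal.{u}) (hμ : ℵ₀ ≤ μ)
    (hμk : μ < #(ResidueField T)) (hR : #R ≤ μ) (hC : #C ≤ μ) (hprime : ∀ P ∈ C, P.IsPrime)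
    (a b : Ideal T → T) (hb : ∀ P ∈ C, b P ∉ P) :
    ∃ u : T, ∀ P ∈ C, TransMod R P (a P + u * b P) := by
  have hex : ∃ k : ResidueField T, ∀ P ∈ C, TransMod R P (a P + resSec T k * b P) := by
    by_contra hcon
    simp only [TransMod] at hcon
    push Not at hcon
    choose P hPC p hp i hi using hcon
    refine absurd hμk (not_lt.2 ?_)
    have h1 : #(ResidueField T) ≤ #(C × Polynomial R) * ℵ₀ := by
      refine Cardinal.mk_le_mk_mul_of_mk_preimage_le
        (fun k => ((⟨P k, hPC k⟩ : C), p k)) ?_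
      rintro ⟨⟨Q, hQ⟩, q⟩
      rw [Cardinal.le_aleph0_iff_set_countable]
      apply Set.Finite.countable
      haveI := hprime Q hQ
      by_cases hne : ((fun k => ((⟨P k, hPC k⟩ : C), p k)) ⁻¹' {(⟨Q, hQ⟩, q)}).Nonempty
      swap
      · rw [Set.not_nonempty_iff_eq_empty] at hne
        rw [hne]; exact Set.finite_empty
      obtain ⟨k0, hk0⟩ := hne
      simp only [Set.mem_preimage, Set.mem_singleton_iff, Prod.mk.injEq, Subtype.mk.injEq] at hk0
      set φ : R →+* T ⧸ Q := (Ideal.Quotient.mk Q).comp R.subtype with hφ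
      have hq0 : q.map φ ≠ 0 := by
        intro h0
        have h2 := congrArg (fun f => Polynomial.coeff f (i k0)) h0
        simp only [Polynomial.coeff_map, Polynomial.coeff_zero, hφ, RingHom.comp_apply,
          Ideal.Quotient.eq_zero_iff_mem] at h2
        apply hi k0
        rw [hk0.1, hk0.2]
        exact h2
      have hfin : (Set.Finite {y : T ⧸ Q | (q.map φ).IsRoot y}) :=
        Polynomial.finite_setOf_isRoot hq0
      refine Set.Finite.of_finite_image (f := fun k =>
        Ideal.Quotient.mk Q (a Q + resSec T k * b Q)) (hfin.subset ?_) ?_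
      · rintro _ ⟨k, hk, rfl⟩
        simp only [Set.mem_preimage, Set.mem_singleton_iff, Prod.mk.injEq,
          Subtype.mk.injEq] at hk
        have h3 := hp k
        rw [hk.1, hk.2] at h3
        rw [← Ideal.Quotient.eq_zero_iff_mem] at h3
        simp only [Set.mem_setOf_eq, Polynomial.IsRoot.def, Polynomial.eval_map]
        rw [Polynomial.aeval_def, Polynomial.hom_eval₂] at h3
        exact h3
      · intro k _ k' _ hkk
        by_contra hne'
        simp only [] at hkk
        rw [Ideal.Quotient.eq] at hkk
        apply hb Q hQ
        refine (Ideal.unit_mul_mem_iff_mem _ (resSec_sub_isUnit hne')).1 ?_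
        convert hkk using 1; ring
    refine h1.trans ?_
    have h2 : #(Polynomial R) ≤ μ :=
      Polynomial.cardinalMk_le_max.trans (max_le hR hμ)
    calc #(C × Polynomial R) * ℵ₀ ≤ (μ * μ) * μ := by
          rw [Cardinal.mk_prod, Cardinal.lift_id, Cardinal.lift_id]
          gcongr
      _ = μ := by rw [Cardinal.mul_eq_self hμ, Cardinal.mul_eq_self hμ]
  obtain ⟨k, hk⟩ := hex
  exact ⟨_, hk⟩

end Avoid

end

section

section Heights
variable {T : Type u} [CommRing T] [IsLocalRing T] [IsNoetherianRing T]

lemma mk_biUnion_le_of {ι α : Type u} (s : Set ι) (A : ι → Set α) (μ : Cardinal.{u})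
    (hμ : ℵ₀ ≤ μ) (hs : #s ≤ μ) (hA : ∀ i ∈ s, #(A i) ≤ μ) : #(⋃ i ∈ s, A i : Set α) ≤ μ := by
  refine (Cardinal.mk_biUnion_le A s).trans ?_
  calc #s * ⨆ x : s, #(A x.1) ≤ μ * μ := by
        gcongr
        exact ciSup_le' fun x => hA x.1 x.2
    _ = μ := Cardinal.mul_eq_self hμ

lemma mk_union_le_of {α : Type u} (A B : Set α) (μ : Cardinal.{u})
    (hμ : ℵ₀ ≤ μ) (hA : #A ≤ μ) (hB : #B ≤ μ) : #(A ∪ B : Set α) ≤ μ :=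
  (Cardinal.mk_union_le A B).trans (Cardinal.add_le_of_le hμ hA hB)

lemma height_step (N : Set T) (μ : Cardinal.{u}) (hμ : ℵ₀ ≤ μ)
    (hμk : μ < #(ResidueField T)) (hN : #N ≤ μ) (n : ℕ) (s : Finset T) (hs : s.card ≤ n)
    (hsm : Ideal.span (s : Set T) ≤ maximalIdeal T)
    (hmin : ∀ Q ∈ (Ideal.span (s : Set T)).minimalPrimes, Q.height = n ∧ ∀ r ∈ N, r ∉ Q)
    (hdim : ((n + 1 : ℕ) : ℕ∞) < (maximalIdeal T).height) :
    ∃ s' : Finset T, s ⊆ s' ∧ s'.card ≤ n + 1 ∧ Ideal.span (s' : Set T) ≤ maximalIdeal T ∧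
      ∀ Q ∈ (Ideal.span (s' : Set T)).minimalPrimes,
        Q.height = (n + 1 : ℕ) ∧ ∀ r ∈ N, r ∉ Q := by
  classical
  have key : ∀ x : T, ∀ Q ∈ (Ideal.span ((insert x s : Finset T) : Set T)).minimalPrimes,
      Q.height ≤ (n + 1 : ℕ) := by
    intro x Q hQ
    refine (Ideal.height_le_card_of_mem_minimalPrimes_span_finset hQ).trans ?_
    exact_mod_cast (Finset.card_insert_le x s).trans (by omega)
  set C : Set (Ideal T) := (Ideal.span (s : Set T)).minimalPrimes ∪
    ⋃ r ∈ N, (Ideal.span ((insert r s : Finset T) : Set T)).minimalPrimes with hC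
  have hfin : ∀ I : Ideal T, #(I.minimalPrimes) ≤ μ := fun I =>
    ((Ideal.finite_minimalPrimes_of_isNoetherianRing T I).countable.le_aleph0).trans hμ
  have hCcard : #C ≤ μ := mk_union_le_of _ _ μ hμ (hfin _)
    (mk_biUnion_le_of N _ μ hμ hN fun r _ => hfin _)
  have hCh : ∀ P ∈ C, P.height ≤ (n + 1 : ℕ) := by
    rintro P (hP | hP)
    · rw [(hmin P hP).1]; exact_mod_cast Nat.le_succ n
    · simp only [Set.mem_iUnion] at hP
      obtain ⟨r, -, hP⟩ := hP
      exact key r P hP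
  obtain ⟨x, hxm, hx⟩ := avoid_ideal C (hCcard.trans_lt hμk) (maximalIdeal T) (by
    intro P hP hle
    exact absurd hdim (not_lt.2 ((Ideal.height_mono hle).trans (hCh P hP))))
  have hstrict : ∀ y : T, ∀ Q : Ideal T, Q.IsPrime → Ideal.span (s : Set T) ≤ Q → y ∈ Q →
      (∀ P ∈ (Ideal.span (s : Set T)).minimalPrimes, y ∉ P) → ((n + 1 : ℕ) : ℕ∞) ≤ Q.height := by
    intro y Q hQ hle hy hav
    obtain ⟨P, hP, hPQ⟩ := Ideal.exists_minimalPrimes_le hle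
    have hlt : P < Q := lt_of_le_of_ne hPQ (fun h => hav P hP (h ▸ hy))
    have := hP.1.1
    have h := Ideal.height_add_one_le_of_lt_of_isPrime hlt
    rw [(hmin P hP).1] at h
    exact_mod_cast h
  have hsle : ∀ y : T, Ideal.span (s : Set T) ≤ Ideal.span ((insert y s : Finset T) : Set T) :=
    fun y => Ideal.span_mono (by simp)
  have hymem : ∀ y : T, y ∈ Ideal.span ((insert y s : Finset T) : Set T) :=
    fun y => Ideal.subset_span (by simp)
  refine ⟨insert x s, Finset.subset_insert _ _, (Finset.card_insert_le x s).trans (by omega), ?_, ?_⟩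
  · rw [Ideal.span_le]
    intro y hy
    rcases Finset.mem_insert.1 (by exact_mod_cast hy) with rfl | hy
    · exact hxm
    · exact hsm (Ideal.subset_span hy)
  · intro Q hQ
    have hQp := hQ.1.1
    refine ⟨le_antisymm (key x Q hQ) (hstrict x Q hQ.1.1 ((hsle x).trans hQ.1.2)
      (hQ.1.2 (hymem x)) fun P hP => hx P (Or.inl hP)), ?_⟩
    intro r hr hrQ
    have hle : Ideal.span ((insert r s : Finset T) : Set T) ≤ Q := by
      rw [Ideal.span_le]
      intro y hy
      rcases Finset.mem_insert.1 (by exact_mod_cast hy) with rfl | hy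
      · exact hrQ
      · exact hQ.1.2 (hsle x (Ideal.subset_span hy))
    obtain ⟨Q', hQ', hQQ⟩ := Ideal.exists_minimalPrimes_le hle
    have hQ'p := hQ'.1.1
    have h1 : ((n + 1 : ℕ) : ℕ∞) ≤ Q'.height := hstrict r Q' hQ'.1.1
      ((hsle r).trans hQ'.1.2) (hQ'.1.2 (hymem r)) (fun P hP => (hmin P hP).2 r hr)
    have h2 : Q' = Q := Ideal.eq_of_le_of_height_le _ hQQ ((key x Q hQ).trans h1)
    refine hx Q' (Or.inr ?_) (h2 ▸ hQ.1.2 (hymem x))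
    simp only [Set.mem_iUnion]
    exact ⟨r, hr, hQ'⟩

lemma exists_prime_height (N : Set T) (μ : Cardinal.{u}) (hμ : ℵ₀ ≤ μ)
    (hμk : μ < #(ResidueField T)) (hN : #N ≤ μ) (n : ℕ) (s : Finset T) (hs : s.card ≤ n)
    (hsm : Ideal.span (s : Set T) ≤ maximalIdeal T)
    (hmin : ∀ Q ∈ (Ideal.span (s : Set T)).minimalPrimes, Q.height = n ∧ ∀ r ∈ N, r ∉ Q)
    (D : ℕ) (hnD : n ≤ D) (hdim : (D : ℕ∞) < (maximalIdeal T).height) :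
    ∃ Q : Ideal T, Q.IsPrime ∧ Q.height = D ∧ (s : Set T) ⊆ Q ∧ ∀ r ∈ N, r ∉ Q := by
  have main : ∃ s' : Finset T, s ⊆ s' ∧ s'.card ≤ D ∧ Ideal.span (s' : Set T) ≤ maximalIdeal T ∧
      ∀ Q ∈ (Ideal.span (s' : Set T)).minimalPrimes, Q.height = D ∧ ∀ r ∈ N, r ∉ Q := by
    induction D, hnD using Nat.le_induction with
    | base => exact ⟨s, subset_rfl, hs, hsm, hmin⟩
    | succ m hm ih =>
      obtain ⟨s1, h1, h2, h3, h4⟩ := ih (lt_of_le_of_lt (by exact_mod_cast Nat.le_succ m) hdim)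
      obtain ⟨s2, g1, g2⟩ := height_step N μ hμ hμk hN m s1 h2 h3 h4 hdim
      exact ⟨s2, h1.trans g1, g2⟩
  obtain ⟨s', h1, h2, h3, h4⟩ := main
  obtain ⟨Q, hQ, -⟩ := Ideal.exists_minimalPrimes_le h3
  exact ⟨Q, hQ.1.1, (h4 Q hQ).1, fun y hy => hQ.1.2 (Ideal.subset_span (h1 hy)), (h4 Q hQ).2⟩

end Heights

section Ass
variable {T : Type u} [CommRing T]

/-- `P` is an associated prime of `T / zT`. -/
def AssDiv (z : T) (P : Ideal T) : Prop :=
  P.IsPrime ∧ ∃ y : T, ∀ r, r ∈ P ↔ z ∣ r * y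

lemma AssDiv.mem {z : T} {P : Ideal T} (h : AssDiv z P) : z ∈ P := by
  obtain ⟨-, y, hy⟩ := h
  exact (hy z).2 (dvd_mul_right _ _)

lemma assDiv_iff [IsNoetherianRing T] {z : T} {P : Ideal T} :
    AssDiv z P ↔ P ∈ associatedPrimes T (T ⧸ Ideal.span {z}) := by
  rw [AssociatedPrimes.mem_iff, isAssociatedPrime_iff]
  refine and_congr_right fun _ => ?_
  have key : ∀ y r : T, r ∈ Submodule.colon (⊥ : Submodule T (T ⧸ Ideal.span {z}))
      {Ideal.Quotient.mk _ y} ↔ z ∣ r * y := by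
    intro y r
    rw [Submodule.mem_colon_singleton, Submodule.mem_bot, Algebra.smul_def,
      Ideal.Quotient.algebraMap_eq, ← map_mul, Ideal.Quotient.eq_zero_iff_mem,
      Ideal.mem_span_singleton]
  constructor
  · rintro ⟨y, hy⟩
    refine ⟨Ideal.Quotient.mk _ y, ?_⟩
    ext r
    rw [key, hy]
  · rintro ⟨x, hx⟩
    obtain ⟨y, rfl⟩ := Ideal.Quotient.mk_surjective x
    refine ⟨y, fun r => ?_⟩
    rw [hx, key]

lemma assDiv_finite [IsNoetherianRing T] (z : T) : {P | AssDiv z P}.Finite := by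
  refine (associatedPrimes.finite T (T ⧸ Ideal.span {z})).subset fun P hP => ?_
  exact assDiv_iff.1 hP

lemma exists_assDiv [IsNoetherianRing T] {z r t : T} (h : z ∣ r * t) (ht : ¬ z ∣ t) :
    ∃ P, AssDiv z P ∧ r ∈ P := by
  have hx : (Ideal.Quotient.mk (Ideal.span {z}) t) ≠ 0 := by
    rwa [Ne, Ideal.Quotient.eq_zero_iff_mem, Ideal.mem_span_singleton]
  obtain ⟨P, hP, hle⟩ := exists_le_isAssociatedPrime_of_isNoetherianRing T _ hx
  refine ⟨P, assDiv_iff.2 hP, hle ?_⟩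
  rw [Submodule.mem_colon_singleton, Submodule.mem_bot, Algebra.smul_def,
      Ideal.Quotient.algebraMap_eq, ← map_mul, Ideal.Quotient.eq_zero_iff_mem,
      Ideal.mem_span_singleton]
  exact h

lemma exists_assDiv_of_not_isUnit [IsNoetherianRing T] {z : T} (h : ¬ IsUnit z) :
    ∃ P, AssDiv z P := by
  obtain ⟨P, hP, -⟩ := exists_assDiv (z := z) (r := z) (t := 1) (by simp)
    (fun h' => h (isUnit_of_dvd_one h'))
  exact ⟨P, hP⟩

lemma assDiv_of_minimalPrimes [IsNoetherianRing T] {z : T} {Q : Ideal T}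
    (h : Q ∈ (Ideal.span {z}).minimalPrimes) : AssDiv z Q := by
  rw [assDiv_iff]
  apply Module.associatedPrimes.minimalPrimes_annihilator_subset_associatedPrimes
  rwa [Ideal.annihilator_quotient]

lemma exists_ass_of_not_regular [IsNoetherianRing T] {r : T} (h : r ∉ nonZeroDivisors T) :
    ∃ P ∈ associatedPrimes T T, r ∈ P := by
  have := biUnion_associatedPrimes_eq_compl_nonZeroDivisors T
  have h2 : r ∈ ((nonZeroDivisors T : Set T))ᶜ := h
  rw [← this] at h2
  simpa using h2

lemma not_mem_ass_of_regular [IsNoetherianRing T] {r : T} (h : r ∈ nonZeroDivisors T)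
    {P : Ideal T} (hP : P ∈ associatedPrimes T T) : r ∉ P := by
  intro hr
  have := biUnion_associatedPrimes_eq_compl_nonZeroDivisors T
  have h2 : r ∈ ((nonZeroDivisors T : Set T))ᶜ := by
    rw [← this]; simp only [Set.mem_iUnion]; exact ⟨P, hP, hr⟩
  exact h2 h

/-- the version for a regular element `f` -/
lemma exists_prime_height_of_regular [IsLocalRing T] [IsNoetherianRing T] (N : Set T)
    (μ : Cardinal.{u}) (hμ : ℵ₀ ≤ μ)
    (hμk : μ < #(ResidueField T)) (hN : #N ≤ μ) (f : T) (hf : f ∈ nonZeroDivisors T)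
    (hfm : f ∈ maximalIdeal T) (hfN : ∀ P, AssDiv f P → ∀ r ∈ N, r ∉ P)
    (D : ℕ) (hnD : 1 ≤ D) (hdim : (D : ℕ∞) < (maximalIdeal T).height) :
    ∃ Q : Ideal T, Q.IsPrime ∧ Q.height = D ∧ f ∈ Q ∧ ∀ r ∈ N, r ∉ Q := by
  obtain ⟨Q, h1, h2, h3, h4⟩ := exists_prime_height N μ hμ hμk hN 1 {f} (by simp)
    (by simpa [Ideal.span_le] using hfm) (by
      intro Q hQ
      simp only [Finset.coe_singleton] at hQ
      refine ⟨le_antisymm ?_ ?_, hfN Q (assDiv_of_minimalPrimes hQ)⟩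
      · exact_mod_cast Ideal.height_le_one_of_isPrincipal_of_mem_minimalPrimes _ _ hQ
      · exact_mod_cast (Ideal.one_le_height_span_singleton_of_mem_nonZeroDivisors hf).trans
          (Ideal.height_mono hQ.1.2)) D hnD hdim
  exact ⟨Q, h1, h2, by simpa using h3, h4⟩

lemma AssDiv.change {f z : T} {P : Ideal T} (h : AssDiv f P) (hf : f ∈ nonZeroDivisors T)
    (hz : z ∈ nonZeroDivisors T) (hzP : z ∈ P) : AssDiv z P := by
  obtain ⟨hp, y, hy⟩ := h
  obtain ⟨y', hy'⟩ := (hy z).1 hzP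
  refine ⟨hp, y', fun r => ?_⟩
  rw [hy]
  constructor
  · rintro ⟨w, hw⟩
    refine ⟨w, ?_⟩
    apply (mul_cancel_left_mem_nonZeroDivisors hf).1
    calc f * (r * y') = r * (f * y') := by ring
      _ = r * (z * y) := by rw [hy']
      _ = z * (r * y) := by ring
      _ = z * (f * w) := by rw [hw]
      _ = f * (z * w) := by ring
  · rintro ⟨w, hw⟩
    refine ⟨w, ?_⟩
    apply (mul_cancel_left_mem_nonZeroDivisors hz).1
    calc z * (r * y) = r * (z * y) := by ring
      _ = r * (f * y') := by rw [hy']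
      _ = f * (r * y') := by ring
      _ = f * (z * w) := by rw [hw]
      _ = z * (f * w) := by ring

end Ass

end

section

section Gauss
open Polynomial

/-- A prime ideal of `R[X]` contracting to zero and containing a prime `f` is generated by `f`. -/
lemma dvd_of_mem_prime {R : Type*} [CommRing R] [IsDomain R] [UniqueFactorizationMonoid R]
    (q : Ideal R[X]) (hq : q.IsPrime) (h0 : ∀ r : R, C r ∈ q → r = 0) {f a : R[X]}
    (hf : Prime f) (hfq : f ∈ q) (haq : a ∈ q) : f ∣ a := by
  classical
  have hdeg : f.natDegree ≠ 0 := by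
    intro h
    rw [eq_C_of_natDegree_eq_zero h] at hfq hf
    exact (prime_C_iff.1 hf).ne_zero (h0 _ hfq)
  have hprim : f.IsPrimitive := hf.irreducible.isPrimitive hdeg
  let K := FractionRing R
  have hirr : Irreducible (f.map (algebraMap R K)) :=
    (hprim.irreducible_iff_irreducible_map_fraction_map (K := K)).1 hf.irreducible
  have hinj : Function.Injective (map (algebraMap R K)) :=
    map_injective _ (IsFractionRing.injective R K)
  have hC : ∀ r : R, f ∣ C r → r = 0 := fun r hr => h0 r (q.mem_of_dvd hr hfq)
  by_cases hdvd : f.map (algebraMap R K) ∣ a.map (algebraMap R K)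
  · obtain ⟨g, hg⟩ := hdvd
    obtain ⟨b, hb⟩ := IsLocalization.integerNormalization_map_to_map (nonZeroDivisors R) g
    have h1 : C (b : R) * a = f * IsLocalization.integerNormalization (nonZeroDivisors R) g := by
      apply hinj
      rw [Polynomial.map_mul, Polynomial.map_mul, hb, hg, map_C, Algebra.smul_def]
      have : algebraMap R K[X] b = C (algebraMap R K b) := rfl
      first
        | (rw [this]; ring)
        | (simp [Algebra.smul_def]; ring)
    rcases hf.dvd_or_dvd (Dvd.intro _ h1.symm) with h | h
    · exact absurd (hC _ h) (nonZeroDivisors.ne_zero b.2)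
    · exact h
  · exfalso
    obtain ⟨u, v, huv⟩ := (hirr.coprime_iff_not_dvd).2 hdvd
    obtain ⟨b, hb⟩ := IsLocalization.integerNormalization_map_to_map (nonZeroDivisors R) u
    obtain ⟨c, hc⟩ := IsLocalization.integerNormalization_map_to_map (nonZeroDivisors R) v
    have h1 : C (b : R) * C (c : R) = (C (c : R) * IsLocalization.integerNormalization (nonZeroDivisors R) u) * f
        + (C (b : R) * IsLocalization.integerNormalization (nonZeroDivisors R) v) * a := by
      apply hinj
      rw [Polynomial.map_add, Polynomial.map_mul, Polynomial.map_mul, Polynomial.map_mul,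
        Polynomial.map_mul, Polynomial.map_mul, hb, hc, map_C, map_C, Algebra.smul_def,
        Algebra.smul_def]
      have e : ∀ b : R, algebraMap R K[X] b = C (algebraMap R K b) := fun _ => rfl
      rw [e, e]
      linear_combination (-(C (algebraMap R K b) * C (algebraMap R K c))) * huv
    have h2 : C ((b : R) * c) ∈ q := by
      rw [C_mul, h1]
      exact q.add_mem (q.mul_mem_left _ hfq) (q.mul_mem_left _ haq)
    have h3 := h0 _ h2
    rcases mul_eq_zero.1 h3 with h | h
    · exact nonZeroDivisors.ne_zero b.2 h
    · exact nonZeroDivisors.ne_zero c.2 h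

end Gauss

section FracRing
open Polynomial
variable {T : Type u} [CommRing T]

/-- `Frac(R[x]) ∩ T`. -/
def fracRing (R : Subring T) (x : T) : Subring T where
  carrier := {s | ∃ a b : R[X], aeval x b ∈ nonZeroDivisors T ∧ aeval x b * s = aeval x a}
  mul_mem' := by
    rintro s t ⟨a, b, hb, h⟩ ⟨a', b', hb', h'⟩
    refine ⟨a * a', b * b', ?_, ?_⟩
    · rw [map_mul]; exact mul_mem hb hb'
    · rw [map_mul, map_mul, ← h, ← h']; ring
  one_mem' := ⟨1, 1, by simp, by simp⟩
  add_mem' := by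
    rintro s t ⟨a, b, hb, h⟩ ⟨a', b', hb', h'⟩
    refine ⟨a * b' + a' * b, b * b', ?_, ?_⟩
    · rw [map_mul]; exact mul_mem hb hb'
    · rw [map_mul, map_add, map_mul, map_mul, ← h, ← h']; ring
  zero_mem' := ⟨0, 1, by simp, by simp⟩
  neg_mem' := by
    rintro s ⟨a, b, hb, h⟩
    exact ⟨-a, b, hb, by rw [map_neg, ← h]; ring⟩

lemma mem_fracRing {R : Subring T} {x s : T} : s ∈ fracRing R x ↔
    ∃ a b : R[X], aeval x b ∈ nonZeroDivisors T ∧ aeval x b * s = aeval x a := Iff.rfl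

lemma aeval_mem_fracRing (R : Subring T) (x : T) (p : R[X]) : aeval x p ∈ fracRing R x :=
  ⟨p, 1, by simp, by simp⟩

lemma le_fracRing (R : Subring T) (x : T) : R ≤ fracRing R x := by
  intro r hr
  have := aeval_mem_fracRing R x (C ⟨r, hr⟩)
  rw [aeval_C] at this
  exact this

lemma self_mem_fracRing (R : Subring T) (x : T) : x ∈ fracRing R x := by
  simpa using aeval_mem_fracRing R x X

lemma fracRing_div {R : Subring T} {x r s : T} (hr : r ∈ fracRing R x)
    (hreg : r ∈ nonZeroDivisors T) (h : r * s ∈ fracRing R x) : s ∈ fracRing R x := by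
  obtain ⟨a, b, hb, h1⟩ := hr
  obtain ⟨a', b', hb', h2⟩ := h
  refine ⟨b * a', b' * a, ?_, ?_⟩
  · rw [map_mul, ← h1]
    exact mul_mem hb' (mul_mem hb hreg)
  · rw [map_mul, map_mul, ← h1, ← h2]; ring

lemma card_fracRing (R : Subring T) (x : T) (μ : Cardinal.{u}) (hμ : ℵ₀ ≤ μ) (hR : #R ≤ μ) :
    #(fracRing R x) ≤ μ := by
  have h2 : #(R[X]) ≤ μ := Polynomial.cardinalMk_le_max.trans (max_le hR hμ)
  have hch : ∀ s : fracRing R x, ∃ a b : R[X], aeval x b ∈ nonZeroDivisors T ∧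
    aeval x b * (s : T) = aeval x a := fun s => s.2
  choose a b hb h using hch
  calc #(fracRing R x) ≤ #(R[X] × R[X]) := by
        refine Cardinal.mk_le_of_injective (f := fun s => (a s, b s)) ?_
        intro s t hst
        simp only [Prod.mk.injEq] at hst
        have h1 := h s
        rw [hst.1, hst.2, ← h t] at h1
        exact Subtype.ext ((mul_cancel_left_mem_nonZeroDivisors (hb t)).1 h1)
    _ ≤ μ * μ := by
        simp only [Cardinal.mk_prod, Cardinal.lift_id]
        gcongr
    _ = μ := Cardinal.mul_eq_self hμ

lemma fracRing_unit {R : Subring T} {x r s : T} (hr : r ∈ fracRing R x)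
    (h : r * s = 1) : s ∈ fracRing R x :=
  fracRing_div hr (IsUnit.mem_nonZeroDivisors (IsUnit.of_mul_eq_one _ h)) (h ▸ one_mem _)

end FracRing

end

section

section GoodDef
variable {T : Type u} [CommRing T]

/-- The inductive hypotheses on a pair `(R, C)`. -/
structure Good (Q0 : Ideal T) (d : ℕ) (R : Subring T) (C : Set (Ideal T)) : Prop where
  unit : ∀ r ∈ R, ∀ s, r * s = 1 → s ∈ R
  prime : ∀ P ∈ C, P.IsPrime
  ass : ∀ P ∈ associatedPrimes T T, P ∈ C
  q0 : Q0 ∈ C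
  zero : ∀ r ∈ R, r ∈ Q0 → r = 0
  reg : ∀ r ∈ R, r ≠ 0 → r ∈ nonZeroDivisors T
  bound : ∀ P ∈ C, P ∈ associatedPrimes T T ∨ P = Q0 ∨
    (P.height ≤ d ∧ ∃ r ∈ R, r ≠ 0 ∧ r ∈ P)
  ufd : UniqueFactorizationMonoid R
  assz : ∀ z : R, Prime z → ∀ P, AssDiv (z : T) P → P ∈ C
  qz : ∀ z : R, Prime z → ∃ Q ∈ C, Q.height = d ∧ (z : T) ∈ Q
  cut : ∀ P ∈ C, ∀ z r : R, Prime z → (z : T) ∈ P → (r : T) ∈ P → z ∣ r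

/-- extension of pairs -/
structure GExt (R : Subring T) (C : Set (Ideal T)) (S : Subring T) (C' : Set (Ideal T)) : Prop where
  le : R ≤ S
  sub : C ⊆ C'
  prime : ∀ z : R, Prime z → Prime (Subring.inclusion le z)
  new : ∀ P ∈ C', P ∉ C → ∀ r ∈ R, r ∈ P → r = 0

lemma GExt.refl (R : Subring T) (C : Set (Ideal T)) : GExt R C R C :=
  ⟨le_rfl, subset_rfl, fun _ hz => hz, fun _ h h' => absurd h h'⟩

lemma GExt.trans {R S U : Subring T} {C D E : Set (Ideal T)} (h : GExt R C S D) (h' : GExt S D U E) :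
    GExt R C U E :=
  ⟨h.le.trans h'.le, h.sub.trans h'.sub, fun z hz => h'.prime _ (h.prime z hz),
    fun P hP hPC r hr hrP => by
      by_cases hD : P ∈ D
      · exact h.new P hD hPC r hr hrP
      · exact h'.new P hP hD r (h.le hr) hrP⟩

variable {Q0 : Ideal T} {d : ℕ} {R : Subring T} {C : Set (Ideal T)}

lemma Good.isDomain (hG : Good Q0 d R C) : IsDomain R := by
  have : Nontrivial T := ⟨⟨0, 1, fun h => (hG.prime _ hG.q0).ne_top
    (Ideal.eq_top_of_isUnit_mem Q0 (zero_mem _) (by rw [h]; exact isUnit_one))⟩⟩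
  have : NoZeroDivisors R := ⟨by
    intro a b hab
    by_contra hcon
    push Not at hcon
    have h1 := hG.reg a a.2 (fun h => hcon.1 (Subtype.ext h))
    have h2 : (a : T) * b = 0 := by exact_mod_cast congrArg Subtype.val hab
    exact hcon.2 (Subtype.ext ((mul_right_mem_nonZeroDivisors_eq_zero_iff h1).1
      (by rw [mul_comm]; exact h2)))⟩
  exact NoZeroDivisors.to_isDomain R

lemma Good.coe_reg (hG : Good Q0 d R C) {z : R} (hz : z ≠ 0) : (z : T) ∈ nonZeroDivisors T :=
  hG.reg z z.2 (fun h => hz (Subtype.ext h))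

lemma Good.not_isUnit (hG : Good Q0 d R C) {z : R} (hz : ¬ IsUnit z) : ¬ IsUnit (z : T) := by
  intro h
  obtain ⟨s, hs⟩ := h.exists_right_inv
  exact hz (IsUnit.of_mul_eq_one ⟨s, hG.unit z z.2 s hs⟩ (Subtype.ext hs))

lemma Good.exists_prime (hG : Good Q0 d R C) {P : Ideal T} (hP : P.IsPrime) {r : T} (hr : r ∈ R)
    (h0 : r ≠ 0) (hrP : r ∈ P) : ∃ z : R, Prime z ∧ (z : T) ∈ P := by
  have := hG.isDomain
  have := hG.ufd
  have h1 : (P.comap R.subtype).IsPrime := Ideal.comap_isPrime _ _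
  obtain ⟨z, hz, hz'⟩ := h1.exists_mem_prime_of_ne_bot (by
    intro h
    have : (⟨r, hr⟩ : R) ∈ P.comap R.subtype := hrP
    rw [h, Ideal.mem_bot] at this
    exact h0 (congrArg Subtype.val this))
  exact ⟨z, hz', hz⟩

lemma Good.exists_assDiv [IsNoetherianRing T] (hG : Good Q0 d R C) {z : R} (hz : Prime z) :
    ∃ P ∈ C, AssDiv (z : T) P := by
  obtain ⟨P, hP⟩ := exists_assDiv_of_not_isUnit (hG.not_isUnit hz.not_isUnit)
  exact ⟨P, hG.assz z hz P hP, hP⟩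

lemma Good.triv_or [IsNoetherianRing T] (hG : Good Q0 d R C) {P : Ideal T} (hP : P ∈ C) :
    (∀ r ∈ R, r ∈ P → r = 0) ∨ ∃ z : R, Prime z ∧ (z : T) ∈ P := by
  by_cases h : ∀ r ∈ R, r ∈ P → r = 0
  · exact Or.inl h
  · push Not at h
    obtain ⟨r, hr, hrP, h0⟩ := h
    exact Or.inr (hG.exists_prime (hG.prime P hP) hr h0 hrP)

open Polynomial

lemma Good.reduced (hG : Good Q0 d R C) {x s : T} (hs : s ∈ fracRing R x) :
    ∃ a b : R[X], IsRelPrime a b ∧ aeval x b ∈ nonZeroDivisors T ∧ aeval x b * s = aeval x a := by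
  have := hG.isDomain
  have := hG.ufd
  have : Nontrivial T := R.subtype_injective.nontrivial
  obtain ⟨a, b, hb, h⟩ := hs
  have hb0 : b ≠ 0 := by
    rintro rfl
    rw [map_zero] at hb
    exact zero_notMem_nonZeroDivisors hb
  obtain ⟨a', b', c', hrel, rfl, rfl⟩ := UniqueFactorizationMonoid.exists_reduced_factors' a b hb0
  rw [map_mul] at hb
  obtain ⟨hc, hb'⟩ := mul_mem_nonZeroDivisors.1 hb
  refine ⟨a', b', hrel, hb', ?_⟩
  apply (mul_cancel_left_mem_nonZeroDivisors hc).1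
  rw [map_mul, map_mul] at h
  rw [← h]; ring

lemma Good.core_dvd [IsNoetherianRing T] (hG : Good Q0 d R C) (x : T) (z : R) (hz : Prime z)
    (hx : ∀ P ∈ C, (z : T) ∈ P → TransMod R P x) {P : Ideal T} (hP : P ∈ C) (hzP : (z : T) ∈ P)
    {s : T} (hs : s ∈ fracRing R x) (hsP : s ∈ P) : (z : T) ∣ s := by
  have := hG.isDomain
  obtain ⟨a, b, hrel, hb, h⟩ := hG.reduced hs
  have h1 : aeval x a ∈ P := by rw [← h]; exact P.mul_mem_left _ hsP
  have h2 : Polynomial.C z ∣ a := by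
    rw [C_dvd_iff_dvd_coeff]
    intro i
    exact hG.cut P hP z _ hz hzP (hx P hP hzP a h1 i)
  have h3 : ¬ Polynomial.C z ∣ b := by
    intro h3
    exact hz.not_isUnit (isUnit_C.1 (hrel h2 h3))
  by_contra hcon
  have h4 : (z : T) ∣ aeval x b * s := by
    obtain ⟨e, rfl⟩ := h2
    rw [h, map_mul, aeval_C]
    exact dvd_mul_right _ _
  obtain ⟨P', hP', hbP'⟩ := _root_.exists_assDiv h4 hcon
  have hP'C := hG.assz z hz P' hP'
  apply h3
  rw [C_dvd_iff_dvd_coeff]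
  intro i
  exact hG.cut P' hP'C z _ hz hP'.mem (hx P' hP'C hP'.mem b hbP' i)

lemma homog (R : Subring T) (x1 x2 : T) (y1 y2 c : R) (h : (y1 : T) * x1 + y2 * x2 = c) (p : R[X]) :
    ∃ N0 : ℕ, ∀ N ≥ N0, ∃ q : R[X], aeval x2 q = (y1 : T) ^ N * aeval x1 p := by
  induction p using Polynomial.induction_on' with
  | add p q hp hq =>
    obtain ⟨N1, h1⟩ := hp
    obtain ⟨N2, h2⟩ := hq
    refine ⟨max N1 N2, fun N hN => ?_⟩
    obtain ⟨q1, hq1⟩ := h1 N ((le_max_left _ _).trans hN)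
    obtain ⟨q2, hq2⟩ := h2 N ((le_max_right _ _).trans hN)
    exact ⟨q1 + q2, by rw [map_add, map_add, hq1, hq2]; ring⟩
  | monomial n a =>
    refine ⟨n, fun N hN => ⟨C y1 ^ (N - n) * C a * (C c - C y2 * X) ^ n, ?_⟩⟩
    have e : ∀ r : R, (algebraMap R T) r = (r : T) := fun _ => rfl
    rw [aeval_monomial]
    simp only [map_mul, map_pow, map_sub, aeval_C, aeval_X, e]
    rw [← h, ← Nat.sub_add_cancel hN, pow_add, Nat.sub_add_cancel hN]
    ring

end GoodDef

section Extension
variable {T : Type u} [CommRing T] [IsNoetherianRing T]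
variable {Q0 : Ideal T} {d : ℕ} {R : Subring T} {C : Set (Ideal T)}

open Polynomial

/-- data for the extension lemma -/
structure ExtData (Q0 : Ideal T) (d : ℕ) (R : Subring T) (C : Set (Ideal T))
    (x1 x2 : T) (y1 y2 c : R) : Prop where
  good : Good Q0 d R C
  eq : (y1 : T) * x1 + y2 * x2 = c
  hy2 : y2 ≠ 0
  both : ∀ P ∈ C, (y1 : T) ∈ P → (y2 : T) ∉ P
  t1 : ∀ P ∈ C, (y2 : T) ∉ P → TransMod R P x1
  t2 : ∀ P ∈ C, (y2 : T) ∈ P → TransMod R P x2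

variable {x1 x2 : T} {y1 y2 c : R}

lemma ExtData.coreS (E : ExtData Q0 d R C x1 x2 y1 y2 c) (z : R) (hz : Prime z)
    {P : Ideal T} (hP : P ∈ C) (hzP : (z : T) ∈ P)
    {s : T} (hs : s ∈ fracRing R x1) (hsP : s ∈ P) : (z : T) ∣ s := by
  by_cases hzy : z ∣ y2
  · have hy2 : ∀ P : Ideal T, (z : T) ∈ P → (y2 : T) ∈ P := by
      intro P h
      obtain ⟨e, he⟩ := hzy
      rw [he]
      exact P.mul_mem_right _ h
    have hy1 : y1 ≠ 0 := by
      rintro rfl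
      exact E.both P hP (zero_mem _) (hy2 P hzP)
    refine E.good.core_dvd x2 z hz (fun P' hP' hz' => E.t2 P' hP' (hy2 P' hz')) hP hzP ?_ hsP
    obtain ⟨a, b, hb, h⟩ := hs
    obtain ⟨N1, h1⟩ := homog R x1 x2 y1 y2 c E.eq a
    obtain ⟨N2, h2⟩ := homog R x1 x2 y1 y2 c E.eq b
    obtain ⟨q1, hq1⟩ := h1 (max N1 N2) (le_max_left _ _)
    obtain ⟨q2, hq2⟩ := h2 (max N1 N2) (le_max_right _ _)
    refine ⟨q1, q2, ?_, ?_⟩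
    · rw [hq2]
      exact mul_mem (pow_mem (E.good.coe_reg hy1) _) hb
    · rw [hq1, hq2, ← h]; ring
  · refine E.good.core_dvd x1 z hz (fun P' hP' hz' => E.t1 P' hP' fun h => hzy ?_) hP hzP hs hsP
    exact E.good.cut P' hP' z y2 hz hz' h

lemma ExtData.L0 (E : ExtData Q0 d R C x1 x2 y1 y2 c) {b : R[X]} (hb : b ≠ 0) :
    aeval x1 b ∈ nonZeroDivisors T := by
  by_contra h
  obtain ⟨P, hP, hbP⟩ := exists_ass_of_not_regular h
  apply hb
  ext i
  have := E.t1 P (E.good.ass P hP) (not_mem_ass_of_regular (E.good.coe_reg E.hy2) hP) b hbP i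
  by_contra h0
  rw [coeff_zero] at h0
  exact not_mem_ass_of_regular (E.good.coe_reg (fun h => h0 (congrArg Subtype.val h))) hP this

lemma ExtData.regS (E : ExtData Q0 d R C x1 x2 y1 y2 c) {s : T} (hs : s ∈ fracRing R x1)
    (h0 : s ≠ 0) : s ∈ nonZeroDivisors T := by
  obtain ⟨a, b, hb, h⟩ := hs
  have ha : a ≠ 0 := by
    rintro rfl
    rw [map_zero] at h
    exact h0 ((mul_right_mem_nonZeroDivisors_eq_zero_iff hb).1 (by rw [mul_comm]; exact h))
  have := E.L0 ha
  rw [← h] at this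
  exact (mul_mem_nonZeroDivisors.1 this).2

lemma ExtData.trivS (E : ExtData Q0 d R C x1 x2 y1 y2 c) {P : Ideal T} (hP : P ∈ C)
    (h0 : ∀ r ∈ R, r ∈ P → r = 0) {s : T} (hs : s ∈ fracRing R x1) (hsP : s ∈ P) : s = 0 := by
  obtain ⟨a, b, hb, h⟩ := hs
  have h1 : aeval x1 a ∈ P := by rw [← h]; exact P.mul_mem_left _ hsP
  have h2 := E.t1 P hP (fun h => E.hy2 (Subtype.ext (h0 _ y2.2 h))) a h1
  have h3 : a = 0 := by
    ext i
    exact h0 _ (a.coeff i).2 (h2 i)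
  rw [h3, map_zero] at h
  exact (mul_right_mem_nonZeroDivisors_eq_zero_iff hb).1 (by rw [mul_comm]; exact h)

lemma ExtData.dvdS (E : ExtData Q0 d R C x1 x2 y1 y2 c) {s t : fracRing R x1} (hs : s ≠ 0)
    (h : (s : T) ∣ t) : s ∣ t := by
  obtain ⟨e, he⟩ := h
  refine ⟨⟨e, fracRing_div s.2 (E.regS s.2 (fun h => hs (Subtype.ext h))) ?_⟩, Subtype.ext he⟩
  rw [← he]; exact t.2

lemma coe_dvd_of_dvd {S : Subring T} {s t : S} (h : s ∣ t) : (s : T) ∣ t := by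
  obtain ⟨e, rfl⟩ := h
  exact dvd_mul_right _ _

lemma ExtData.primeS (E : ExtData Q0 d R C x1 x2 y1 y2 c) {z : R} (hz : Prime z) :
    Prime (Subring.inclusion (le_fracRing R x1) z) := by
  obtain ⟨P, hPC, hP⟩ := E.good.exists_assDiv hz
  have hz0 : Subring.inclusion (le_fracRing R x1) z ≠ 0 := by
    intro h
    exact hz.ne_zero (Subtype.ext (congrArg Subtype.val h :))
  refine ⟨hz0, ?_, ?_⟩
  · intro h
    exact hP.1.ne_top (Ideal.eq_top_of_isUnit_mem P hP.mem (h.map (fracRing R x1).subtype))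
  · intro s t hst
    have h1 : (s : T) * t ∈ P := P.mem_of_dvd (coe_dvd_of_dvd hst) hP.mem
    rcases hP.1.mem_or_mem h1 with h | h
    · exact Or.inl (E.dvdS hz0 (E.coreS z hz hPC hP.mem s.2 h))
    · exact Or.inr (E.dvdS hz0 (E.coreS z hz hPC hP.mem t.2 h))

lemma ExtData.newCut (E : ExtData Q0 d R C x1 x2 y1 y2 c) {f : T}
    {g : R[X]} (hg : Prime g) (hfg : f ∣ aeval x1 g)
    (hA : ∀ P, AssDiv f P → ∀ r ∈ R, r ∈ P → r = 0)
    {P : Ideal T} (hP : P.IsPrime) (hfP : f ∈ P) (hP0 : ∀ r ∈ R, r ∈ P → r = 0)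
    {r : T} (hr : r ∈ fracRing R x1) (hrP : r ∈ P) : f ∣ r := by
  have := E.good.isDomain
  have := E.good.ufd
  obtain ⟨a, b, hrel, hb, h⟩ := E.good.reduced hr
  have key : ∀ P : Ideal T, P.IsPrime → f ∈ P → (∀ r ∈ R, r ∈ P → r = 0) → ∀ p : R[X],
      aeval x1 p ∈ P → g ∣ p := by
    intro P hP hfP hP0 p hp
    have hq : (P.comap (aeval x1 : R[X] →ₐ[R] T)).IsPrime := Ideal.comap_isPrime _ _
    refine dvd_of_mem_prime _ hq ?_ hg (P.mem_of_dvd hfg hfP) hp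
    intro r hr
    rw [Ideal.mem_comap, aeval_C] at hr
    exact Subtype.ext (hP0 _ r.2 hr)
  have h1 : g ∣ a := key P hP hfP hP0 a (by rw [← h]; exact P.mul_mem_left _ hrP)
  by_contra hcon
  obtain ⟨P', hP', hb'⟩ := exists_assDiv (r := aeval x1 b) (t := r) (z := f) (by
    rw [h]
    obtain ⟨e, rfl⟩ := h1
    rw [map_mul]
    exact hfg.mul_right _) hcon
  exact hg.not_isUnit (hrel h1 (key P' hP'.1 hP'.mem (hA P' hP') b hb'))

lemma ExtData.prime_of (E : ExtData Q0 d R C x1 x2 y1 y2 c) {f : fracRing R x1} (hf : ¬ IsUnit f)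
    (hf0 : f ≠ 0)
    {g : R[X]} (hg : Prime g) (hfg : (f : T) ∣ aeval x1 g)
    (hA : ∀ P, AssDiv (f : T) P → ∀ r ∈ R, r ∈ P → r = 0) : Prime f := by
  have hfT : ¬ IsUnit (f : T) := by
    intro h
    obtain ⟨s, hs⟩ := h.exists_right_inv
    exact hf (IsUnit.of_mul_eq_one ⟨s, fracRing_unit f.2 hs⟩ (Subtype.ext hs))
  obtain ⟨P, hP⟩ := exists_assDiv_of_not_isUnit hfT
  refine ⟨hf0, hf, ?_⟩
  intro s t hst
  have h1 : (s : T) * t ∈ P := P.mem_of_dvd (coe_dvd_of_dvd hst) hP.mem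
  rcases hP.1.mem_or_mem h1 with h | h
  · exact Or.inl (E.dvdS hf0 (E.newCut hg hfg hA hP.1 hP.mem (hA P hP) s.2 h))
  · exact Or.inr (E.dvdS hf0 (E.newCut hg hfg hA hP.1 hP.mem (hA P hP) t.2 h))

/-- an element of `S` not divisible by any prime of `R` -/
def IsNew (R : Subring T) (f : T) : Prop := ∀ z : R, Prime z → ¬ (z : T) ∣ f

lemma ExtData.triv_of_new (E : ExtData Q0 d R C x1 x2 y1 y2 c) {f : T} (hf : f ∈ fracRing R x1)
    (hf0 : f ≠ 0) (hnew : IsNew R f) : ∀ P, AssDiv f P → ∀ r ∈ R, r ∈ P → r = 0 := by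
  intro P hP r hr hrP
  by_contra h0
  obtain ⟨z, hz, hzP⟩ := E.good.exists_prime hP.1 hr h0 hrP
  have h1 := hP.change (E.regS hf hf0) (E.good.coe_reg hz.ne_zero) hzP
  exact hnew z hz (E.coreS z hz (E.good.assz z hz P h1) hzP hf hP.mem)

/-- the evaluation map into `S` -/
noncomputable def evS (R : Subring T) (x1 : T) : R[X] →+* fracRing R x1 :=
  ((aeval x1 : R[X] →ₐ[R] T) : R[X] →+* T).codRestrict (fracRing R x1) (aeval_mem_fracRing R x1)

lemma ExtData.exists_poly (E : ExtData Q0 d R C x1 x2 y1 y2 c) (p : Ideal (fracRing R x1))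
    (hp : p.IsPrime) (hp0 : p ≠ ⊥) : ∃ g : R[X], Prime g ∧ evS R x1 g ∈ p := by
  have := E.good.isDomain
  have := E.good.ufd
  obtain ⟨s, hs, hs0⟩ := Submodule.exists_mem_ne_zero_of_ne_bot hp0
  obtain ⟨a, b, hb, h⟩ := s.2
  have ha : a ≠ 0 := by
    rintro rfl
    rw [map_zero] at h
    exact hs0 (Subtype.ext
      ((mul_right_mem_nonZeroDivisors_eq_zero_iff hb).1 (by rw [mul_comm]; exact h)))
  have h1 : evS R x1 a ∈ p := by
    have : evS R x1 a = evS R x1 b * s := Subtype.ext h.symm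
    rw [this]
    exact p.mul_mem_left _ hs
  have hq : (p.comap (evS R x1)).IsPrime := Ideal.comap_isPrime _ _
  obtain ⟨g, hg, hg'⟩ := hq.exists_mem_prime_of_ne_bot (by
    intro h
    have : a ∈ p.comap (evS R x1) := h1
    rw [h] at this
    exact ha this)
  exact ⟨g, hg', hg⟩

lemma ExtData.isDomainS (E : ExtData Q0 d R C x1 x2 y1 y2 c) : IsDomain (fracRing R x1) := by
  have := E.good.isDomain
  have : Nontrivial T := R.subtype_injective.nontrivial
  have : NoZeroDivisors (fracRing R x1) := ⟨by
    intro a b hab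
    by_contra hcon
    push Not at hcon
    have h1 := E.regS a.2 (fun h => hcon.1 (Subtype.ext h))
    have h2 : (a : T) * b = 0 := by exact_mod_cast congrArg Subtype.val hab
    exact hcon.2 (Subtype.ext ((mul_right_mem_nonZeroDivisors_eq_zero_iff h1).1
      (by rw [mul_comm]; exact h2)))⟩
  exact NoZeroDivisors.to_isDomain _

lemma ExtData.ufdS (E : ExtData Q0 d R C x1 x2 y1 y2 c) :
    UniqueFactorizationMonoid (fracRing R x1) := by
  have := E.good.isDomain
  have := E.good.ufd
  have := E.isDomainS
  rw [UniqueFactorizationMonoid.iff_exists_prime_mem_of_isPrime]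
  intro p hp0 hp
  by_cases hR : p.comap (Subring.inclusion (le_fracRing R x1)) = ⊥
  · obtain ⟨g, hg, hgp⟩ := E.exists_poly p hp hp0
    let F : Set (Ideal T) := {I | ∃ w ∈ R, w ≠ 0 ∧ ∃ f ∈ fracRing R x1, aeval x1 g = w * f ∧
      I = Ideal.span {f}}
    have hF : F.Nonempty := by
      have : Nontrivial T := R.subtype_injective.nontrivial
      exact ⟨_, 1, one_mem _, one_ne_zero, aeval x1 g, aeval_mem_fracRing R x1 g,
        (one_mul _).symm, rfl⟩
    obtain ⟨I, ⟨w, hw, hw0, f, hf, hgf, rfl⟩, hmax⟩ := set_has_maximal_iff_noetherian.2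
      (inferInstance : IsNoetherian T T) F hF
    have hg0 : aeval x1 g ∈ nonZeroDivisors T := E.L0 hg.ne_zero
    have hfreg : f ∈ nonZeroDivisors T := by
      rw [hgf] at hg0
      exact (mul_mem_nonZeroDivisors.1 hg0).2
    have : Nontrivial T := R.subtype_injective.nontrivial
    have hf0 : f ≠ 0 := nonZeroDivisors.ne_zero hfreg
    have hnew : IsNew R f := by
      rintro z hz ⟨e, he⟩
      have hzreg := E.good.coe_reg hz.ne_zero
      have heS : e ∈ fracRing R x1 := fracRing_div (le_fracRing R x1 z.2) hzreg (by rwa [← he])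
      refine hmax (Ideal.span {e}) ⟨w * z, mul_mem hw z.2, ?_, e, heS, ?_, rfl⟩ ?_
      · intro h
        exact hw0 ((mul_right_mem_nonZeroDivisors_eq_zero_iff hzreg).1 h)
      · rw [hgf, he]; ring
      · refine lt_of_le_of_ne ?_ ?_
        · rw [Ideal.span_singleton_le_span_singleton, he]
          exact dvd_mul_left _ _
        · intro heq
          have : e ∈ Ideal.span {f} := by rw [heq]; exact Ideal.mem_span_singleton_self e
          rw [Ideal.mem_span_singleton] at this
          obtain ⟨v, hv⟩ := this
          have he2 : e ∈ nonZeroDivisors T := by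
            rw [he] at hfreg
            exact (mul_mem_nonZeroDivisors.1 hfreg).2
          have : (z : T) * v = 1 := by
            apply (mul_cancel_left_mem_nonZeroDivisors he2).1
            rw [mul_one]
            calc e * (z * v) = (z * e) * v := by ring
              _ = e := by rw [← he, ← hv]
          exact E.good.not_isUnit hz.not_isUnit (IsUnit.of_mul_eq_one _ this)
    have hfp : (⟨f, hf⟩ : fracRing R x1) ∈ p := by
      have : evS R x1 g = Subring.inclusion (le_fracRing R x1) ⟨w, hw⟩ * ⟨f, hf⟩ := Subtype.ext hgf
      rw [this] at hgp
      refine (hp.mem_or_mem hgp).resolve_left fun h => ?_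
      have : (⟨w, hw⟩ : R) ∈ p.comap (Subring.inclusion (le_fracRing R x1)) := h
      rw [hR] at this
      exact hw0 (congrArg Subtype.val this)
    refine ⟨⟨f, hf⟩, hfp, E.prime_of ?_ ?_ hg ?_ (E.triv_of_new hf hf0 hnew)⟩
    · intro h
      exact hp.ne_top (Ideal.eq_top_of_isUnit_mem p hfp h)
    · intro h
      exact hf0 (congrArg Subtype.val h)
    · rw [hgf]; exact dvd_mul_left _ _
  · have hq : (p.comap (Subring.inclusion (le_fracRing R x1))).IsPrime := Ideal.comap_isPrime _ _
    obtain ⟨z, hz, hz'⟩ := hq.exists_mem_prime_of_ne_bot hR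
    exact ⟨_, hz, E.primeS hz'⟩

lemma AssDiv.congr {f g : T} (h : f ∣ g) (h' : g ∣ f) {P : Ideal T} (hP : AssDiv f P) :
    AssDiv g P := by
  obtain ⟨hp, y, hy⟩ := hP
  exact ⟨hp, y, fun r => (hy r).trans ⟨fun h1 => h'.trans h1, fun h1 => h.trans h1⟩⟩

/-- The extension lemma. -/
lemma ExtData.extension [IsLocalRing T] (E : ExtData Q0 d R C x1 x2 y1 y2 c) (hd1 : 1 ≤ d)
    (hreg : ∀ z ∈ nonZeroDivisors T, ∀ P, AssDiv z P → P.height ≤ d)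
    (hdim : (d : ℕ∞) < (maximalIdeal T).height)
    (μ : Cardinal.{u}) (hμ : ℵ₀ ≤ μ) (hμk : μ < #(ResidueField T)) (hR : #R ≤ μ) (hC : #C ≤ μ) :
    ∃ (S : Subring T) (C' : Set (Ideal T)), Good Q0 d S C' ∧ GExt R C S C' ∧ #S ≤ μ ∧ #C' ≤ μ ∧
      x1 ∈ S ∧ x2 ∈ S := by
  classical
  have := E.good.isDomain
  have := E.good.ufd
  have := E.isDomainS
  have hne : ∀ {f : fracRing R x1}, f ≠ 0 → (f : T) ≠ 0 := fun h h' => h (Subtype.ext h')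
  have hcardS := card_fracRing R x1 μ hμ hR
  -- data attached to new primes
  have hpoly : ∀ f : fracRing R x1, Prime f → ∃ g : R[X], Prime g ∧ (f : T) ∣ aeval x1 g := by
    intro f hf
    obtain ⟨g, hg, hgf⟩ := E.exists_poly (Ideal.span {f})
      ((Ideal.span_singleton_prime hf.ne_zero).2 hf)
      (by rw [Ne, Ideal.span_singleton_eq_bot]; exact hf.ne_zero)
    rw [Ideal.mem_span_singleton] at hgf
    exact ⟨g, hg, coe_dvd_of_dvd hgf⟩
  have hfm : ∀ f : fracRing R x1, Prime f → (f : T) ∈ maximalIdeal T := by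
    intro f hf h
    obtain ⟨s, hs⟩ := IsUnit.exists_right_inv h
    exact hf.not_isUnit (IsUnit.of_mul_eq_one ⟨s, fracRing_unit f.2 hs⟩ (Subtype.ext hs))
  have hQ : ∀ f : fracRing R x1, ∃ Q : Ideal T, (Prime f ∧ IsNew R (f : T)) →
      Q.IsPrime ∧ Q.height = d ∧ (f : T) ∈ Q ∧ ∀ r ∈ R, r ∈ Q → r = 0 := by
    intro f
    by_cases hf : Prime f ∧ IsNew R (f : T)
    · have htriv := E.triv_of_new f.2 (hne hf.1.ne_zero) hf.2
      obtain ⟨Q, h1, h2, h3, h4⟩ := exists_prime_height_of_regular {r | r ∈ R ∧ r ≠ 0} μ hμ hμk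
        ((Cardinal.mk_le_mk_of_subset (fun r hr => hr.1 : {r | r ∈ R ∧ r ≠ 0} ⊆ (R : Set T))).trans
          hR) (f : T) (E.regS f.2 (hne hf.1.ne_zero)) (hfm f hf.1)
        (fun P hP r hr hrP => hr.2 (htriv P hP r hr.1 hrP)) d hd1 hdim
      refine ⟨Q, fun _ => ⟨h1, h2, h3, fun r hr hrQ => ?_⟩⟩
      by_contra h0
      exact h4 r ⟨hr, h0⟩ hrQ
    · exact ⟨⊤, fun h => absurd h hf⟩
  choose Q hQ using hQ
  let N : Set (fracRing R x1) := {f | Prime f ∧ IsNew R (f : T)}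
  let C' : Set (Ideal T) := C ∪ ⋃ f ∈ N, ({P | AssDiv (f : T) P} ∪ {Q f})
  have hC' : ∀ P, P ∈ C' ↔ P ∈ C ∨ ∃ f ∈ N, AssDiv (f : T) P ∨ P = Q f := by
    intro P
    simp only [C', Set.mem_union, Set.mem_iUnion, exists_prop, Set.mem_singleton_iff,
      Set.mem_ofPred_eq]
  have hnewP : ∀ f ∈ N, ∀ P, AssDiv (f : T) P ∨ P = Q f → P.IsPrime ∧ P.height ≤ d ∧ (f : T) ∈ P ∧
      ∀ r ∈ R, r ∈ P → r = 0 := by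
    rintro f hf P (hP | rfl)
    · exact ⟨hP.1, hreg _ (E.regS f.2 (hne hf.1.ne_zero)) P hP, hP.mem,
        E.triv_of_new f.2 (hne hf.1.ne_zero) hf.2 P hP⟩
    · obtain ⟨h1, h2, h3, h4⟩ := hQ f hf
      exact ⟨h1, h2.le, h3, h4⟩
  -- old primes
  have hold : ∀ f : fracRing R x1, Prime f → ¬ IsNew R (f : T) → ∃ z : R, Prime z ∧
      (z : T) ∣ f ∧ (f : T) ∣ z := by
    intro f hf hn
    unfold IsNew at hn
    push Not at hn
    obtain ⟨z, hz, hzf⟩ := hn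
    have hz' := E.primeS hz
    have h1 : Subring.inclusion (le_fracRing R x1) z ∣ f := E.dvdS hz'.ne_zero hzf
    exact ⟨z, hz, hzf, coe_dvd_of_dvd (hz'.associated_of_dvd hf h1).symm.dvd⟩
  refine ⟨fracRing R x1, C', ?_, ⟨le_fracRing R x1, Set.subset_union_left, fun z hz => E.primeS hz,
    fun P hP hPC => ((hC' P).1 hP).elim (fun h => absurd h hPC)
      fun ⟨f, hf, h⟩ => (hnewP f hf P h).2.2.2⟩,
    hcardS, ?_, self_mem_fracRing R x1, ?_⟩
  · refine ⟨fun r hr s hs => fracRing_unit hr hs, ?_, fun P hP => Or.inl (E.good.ass P hP),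
      Or.inl E.good.q0, fun r hr h => E.trivS E.good.q0 E.good.zero hr h,
      fun r hr h => E.regS hr h, ?_, E.ufdS, ?_, ?_, ?_⟩
    · intro P hP
      rcases (hC' P).1 hP with h | ⟨f, hf, h⟩
      · exact E.good.prime P h
      · exact (hnewP f hf P h).1
    · intro P hP
      rcases (hC' P).1 hP with h | ⟨f, hf, h⟩
      · rcases E.good.bound P h with h | h | ⟨h, r, hr, h'⟩
        · exact Or.inl h
        · exact Or.inr (Or.inl h)
        · exact Or.inr (Or.inr ⟨h, r, le_fracRing R x1 hr, h'⟩)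
      · obtain ⟨-, h2, h3, -⟩ := hnewP f hf P h
        exact Or.inr (Or.inr ⟨h2, f, f.2, hne hf.1.ne_zero, h3⟩)
    · intro f hf P hP
      by_cases hn : IsNew R (f : T)
      · exact (hC' P).2 (Or.inr ⟨f, ⟨hf, hn⟩, Or.inl hP⟩)
      · obtain ⟨z, hz, h1, h2⟩ := hold f hf hn
        exact (hC' P).2 (Or.inl (E.good.assz z hz P (hP.congr h2 h1)))
    · intro f hf
      by_cases hn : IsNew R (f : T)
      · exact ⟨Q f, (hC' _).2 (Or.inr ⟨f, ⟨hf, hn⟩, Or.inr rfl⟩), (hQ f ⟨hf, hn⟩).2.1,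
          (hQ f ⟨hf, hn⟩).2.2.1⟩
      · obtain ⟨z, hz, h1, h2⟩ := hold f hf hn
        obtain ⟨Q', h3, h4, h5⟩ := E.good.qz z hz
        exact ⟨Q', Or.inl h3, h4, Q'.mem_of_dvd h1 h5⟩
    · intro P hP f r hf hfP hrP
      rcases (hC' P).1 hP with h | ⟨f0, hf0, h⟩
      · rcases E.good.triv_or h with h0 | ⟨z, hz, hzP⟩
        · exact absurd (E.trivS h h0 f.2 hfP) (hne hf.ne_zero)
        · have hz' := E.primeS hz
          have h1 : Subring.inclusion (le_fracRing R x1) z ∣ f :=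
            E.dvdS hz'.ne_zero (E.coreS z hz h hzP f.2 hfP)
          exact (hz'.associated_of_dvd hf h1).symm.dvd.trans
            (E.dvdS hz'.ne_zero (E.coreS z hz h hzP r.2 hrP))
      · obtain ⟨h1, h2, h3, h4⟩ := hnewP f0 hf0 P h
        obtain ⟨g, hg, hfg⟩ := hpoly f0 hf0.1
        have htriv := E.triv_of_new f0.2 (hne hf0.1.ne_zero) hf0.2
        have h5 : f0 ∣ f := E.dvdS hf0.1.ne_zero (E.newCut hg hfg htriv h1 h3 h4 f.2 hfP)
        have h6 : f0 ∣ r := E.dvdS hf0.1.ne_zero (E.newCut hg hfg htriv h1 h3 h4 r.2 hrP)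
        exact (hf0.1.associated_of_dvd hf h5).symm.dvd.trans h6
  · refine mk_union_le_of _ _ μ hμ hC (mk_biUnion_le_of _ _ μ hμ
      ((Cardinal.mk_set_le _).trans hcardS) fun f hf => mk_union_le_of _ _ μ hμ ?_ ?_)
    · exact ((assDiv_finite (f : T)).lt_aleph0.le).trans hμ
    · rw [Cardinal.mk_singleton]; exact one_le_aleph0.trans hμ
  · refine fracRing_div (le_fracRing R x1 y2.2) (E.good.coe_reg E.hy2) ?_
    have : (y2 : T) * x2 = c - y1 * x1 := by rw [← E.eq]; ring
    rw [this]
    exact sub_mem (le_fracRing R x1 c.2) (mul_mem (le_fracRing R x1 y1.2) (self_mem_fracRing R x1))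

end Extension

end

section

section Steps
variable {T : Type u} [CommRing T] [IsNoetherianRing T] [IsLocalRing T]
variable {Q0 : Ideal T} {d : ℕ}

/-- standing hypotheses on `T` and `d` -/
structure Hyp (T : Type u) [CommRing T] [IsLocalRing T] (d : ℕ) : Prop where
  hd1 : 1 ≤ d
  hreg : ∀ z ∈ nonZeroDivisors T, ∀ P, AssDiv z P → P.height ≤ d
  hdim : (d : ℕ∞) < (maximalIdeal T).height

/-- a good pair of size at most `μ` -/
structure GoodC (Q0 : Ideal T) (d : ℕ) (μ : Cardinal.{u}) (R : Subring T) (C : Set (Ideal T)) :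
    Prop where
  good : Good Q0 d R C
  hR : #R ≤ μ
  hC : #C ≤ μ

variable {μ : Cardinal.{u}} {R : Subring T} {C : Set (Ideal T)}

lemma ExtData.extC {x1 x2 : T} {y1 y2 c : R} (E : ExtData Q0 d R C x1 x2 y1 y2 c) (H : Hyp T d)
    (hμ : ℵ₀ ≤ μ) (hμk : μ < #(ResidueField T)) (hG : GoodC Q0 d μ R C) :
    ∃ (S : Subring T) (C' : Set (Ideal T)), GoodC Q0 d μ S C' ∧ GExt R C S C' ∧
      x1 ∈ S ∧ x2 ∈ S := by
  obtain ⟨S, C', h1, h2, h3, h4, h5, h6⟩ := E.extension H.hd1 H.hreg H.hdim μ hμ hμk hG.hR hG.hC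
  exact ⟨S, C', ⟨h1, h3, h4⟩, h2, h5, h6⟩

lemma coset_step (H : Hyp T d) (hμ : ℵ₀ ≤ μ) (hμk : μ < #(ResidueField T)) (hG : GoodC Q0 d μ R C)
    (u : T) (J : Ideal T) (hJ : ∀ P ∈ C, ¬ J ≤ P) :
    ∃ (S : Subring T) (C' : Set (Ideal T)), GoodC Q0 d μ S C' ∧ GExt R C S C' ∧
      ∃ x ∈ S, x - u ∈ J ∧ ∀ P ∈ C, x ∉ P := by
  obtain ⟨w, hwJ, hw⟩ := avoid_ideal C (hG.hC.trans_lt hμk) J hJ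
  obtain ⟨s, hs⟩ := exists_transMod R C μ hμ hμk hG.hR hG.hC hG.good.prime (fun _ => u)
    (fun _ => w) hw
  have hD := hG.good.isDomain
  have h1 : ∀ P ∈ C, (1 : T) ∉ P := fun P hP h =>
    (hG.good.prime P hP).ne_top ((Ideal.eq_top_iff_one P).2 h)
  have E : ExtData Q0 d R C (u + s * w) 0 0 1 0 :=
    { good := hG.good
      eq := by simp
      hy2 := one_ne_zero
      both := fun P hP _ => by simpa using h1 P hP
      t1 := fun P hP _ => hs P hP
      t2 := fun P hP h => absurd h (by simpa using h1 P hP) }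
  obtain ⟨S, C', hS, hE, hx, -⟩ := E.extC H hμ hμk hG
  refine ⟨S, C', hS, hE, u + s * w, hx, ?_, ?_⟩
  · rw [add_sub_cancel_left]
    exact J.mul_mem_left _ hwJ
  · intro P hP hxP
    have := hs P hP Polynomial.X (by simpa using hxP) 1
    exact h1 P hP (by simpa using this)

lemma Good.dvd_of_coe_dvd (hG : Good Q0 d R C) (a : R) : ∀ c : R, a ≠ 0 → (a : T) ∣ c → a ∣ c := by
  have := hG.isDomain
  have := hG.ufd
  induction a using UniqueFactorizationMonoid.induction_on_prime with
  | h₁ => intro c h; exact absurd rfl h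
  | h₂ x hx => intro c _ _; exact hx.dvd
  | h₃ a p ha hp ih =>
    intro c _ h
    obtain ⟨P, hPC, hP⟩ := hG.exists_assDiv hp
    have h1 : (c : T) ∈ P := by
      refine P.mem_of_dvd h ?_
      rw [Subring.coe_mul]
      exact P.mul_mem_right _ hP.mem
    obtain ⟨c', rfl⟩ := hG.cut P hPC p c hp hP.mem h1
    refine mul_dvd_mul_left p (ih c' ha ?_)
    obtain ⟨e, he⟩ := h
    refine ⟨e, (mul_cancel_left_mem_nonZeroDivisors (hG.coe_reg hp.ne_zero)).1 ?_⟩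
    rw [Subring.coe_mul, Subring.coe_mul] at he
    rw [he]; ring

lemma Good.not_both (hG : Good Q0 d R C) {a b : R} (hab : IsRelPrime a b) (ha : a ≠ 0)
    {P : Ideal T} (hP : P ∈ C) (h1 : (a : T) ∈ P) : (b : T) ∉ P := by
  intro h2
  obtain ⟨z, hz, hzP⟩ := hG.exists_prime (hG.prime P hP) a.2 (fun h => ha (Subtype.ext h)) h1
  exact hz.not_isUnit (hab (hG.cut P hP z a hz hzP h1) (hG.cut P hP z b hz hzP h2))

lemma two_gen (H : Hyp T d) (hμ : ℵ₀ ≤ μ) (hμk : μ < #(ResidueField T)) (hG : GoodC Q0 d μ R C)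
    (g y c : R) (hgy : IsRelPrime g y) (hg : g ≠ 0) (e t : T) (h : (c : T) = g * e + y * t) :
    ∃ (S : Subring T) (C' : Set (Ideal T)), GoodC Q0 d μ S C' ∧ GExt R C S C' ∧
      ∃ u : T, e - u * y ∈ S ∧ t + u * g ∈ S := by
  classical
  obtain ⟨u, hu⟩ := exists_transMod R C μ hμ hμk hG.hR hG.hC hG.good.prime
    (fun P => if (g : T) ∈ P then e else t) (fun P => if (g : T) ∈ P then - (y : T) else g) (by
      intro P hP
      split_ifs with h1
      · rw [neg_mem_iff]
        exact hG.good.not_both hgy hg hP h1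
      · exact h1)
  have E : ExtData Q0 d R C (t + u * g) (e - u * y) y g c :=
    { good := hG.good
      eq := by rw [h]; ring
      hy2 := hg
      both := fun P hP h1 h2 => hG.good.not_both hgy hg hP h2 h1
      t1 := fun P hP h => by
        have := hu P hP
        rwa [if_neg h, if_neg h] at this
      t2 := fun P hP h => by
        have := hu P hP
        rwa [if_pos h, if_pos h, mul_neg, ← sub_eq_add_neg] at this }
  obtain ⟨S, C', hS, hE, h1, h2⟩ := E.extC H hμ hμk hG
  exact ⟨S, C', hS, hE, u, h2, h1⟩

lemma closing_step (H : Hyp T d) (hμ : ℵ₀ ≤ μ) (hμk : μ < #(ResidueField T)) (n : ℕ) :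
    ∀ (R : Subring T) (C : Set (Ideal T)), GoodC Q0 d μ R C → ∀ (y : Fin n → T), (∀ i, y i ∈ R) →
    ∀ c ∈ R, ∀ t : Fin n → T, c = ∑ i, y i * t i →
    ∃ (S : Subring T) (C' : Set (Ideal T)), GoodC Q0 d μ S C' ∧ GExt R C S C' ∧
      ∃ t' : Fin n → T, (∀ i, t' i ∈ S) ∧ c = ∑ i, y i * t' i := by
  classical
  induction n with
  | zero =>
    intro R C hG y hy c hc t h
    exact ⟨R, C, hG, GExt.refl R C, t, fun i => i.elim0, h⟩
  | succ n ih =>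
    intro R C hG y hy c hc t h
    have := hG.good.isDomain
    have := hG.good.ufd
    rw [Fin.sum_univ_castSucc] at h
    by_cases hall : ∀ i : Fin n, y i.castSucc = 0
    · have h1 : c = y (Fin.last n) * t (Fin.last n) := by simpa [hall] using h
      by_cases hy0 : y (Fin.last n) = 0
      · exact ⟨R, C, hG, GExt.refl R C, fun _ => 0, fun i => zero_mem _, by
          simp [h1, hy0]⟩
      · obtain ⟨e, he⟩ := hG.good.dvd_of_coe_dvd ⟨_, hy (Fin.last n)⟩ ⟨c, hc⟩
          (fun h => hy0 (congrArg Subtype.val h)) ⟨_, h1⟩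
        refine ⟨R, C, hG, GExt.refl R C, fun _ => e, fun i => e.2, ?_⟩
        rw [Fin.sum_univ_castSucc]
        have he' : c = y (Fin.last n) * e := congrArg Subtype.val he
        simp [hall, he']
    · push Not at hall
      obtain ⟨i0, hi0⟩ := hall
      obtain ⟨inst⟩ : Nonempty (NormalizedGCDMonoid R) := inferInstance
      let yR : Fin n → R := fun i => ⟨y i.castSucc, hy _⟩
      obtain ⟨y', hy', hgcd⟩ := Finset.extract_gcd (s := Finset.univ) yR ⟨i0, Finset.mem_univ _⟩
      set g := Finset.univ.gcd yR with hg
      have hg0 : g ≠ 0 := by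
        intro h0
        have := hy' i0 (Finset.mem_univ _)
        rw [h0, zero_mul] at this
        exact hi0 (congrArg Subtype.val this)
      have hyc : ∀ i : Fin n, y i.castSucc = (g : T) * y' i := fun i =>
        congrArg Subtype.val (hy' i (Finset.mem_univ _))
      have hi0' : (y' i0 : T) ≠ 0 := by
        intro h0
        rw [hyc, h0, mul_zero] at hi0
        exact hi0 rfl
      have hnot : ∀ P ∈ C, ∃ i, (y' i : T) ∉ P := by
        intro P hP
        by_contra hcon
        push Not at hcon
        obtain ⟨z, hz, hzP⟩ := hG.good.exists_prime (hG.good.prime P hP) (y' i0).2 hi0' (hcon i0)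
        apply hz.not_isUnit
        rw [isUnit_iff_dvd_one, ← hgcd, Finset.dvd_gcd_iff]
        intro i _
        exact hG.good.cut P hP z _ hz hzP (hcon i)
      obtain ⟨yn', g', h', hrel, hyn, hgg⟩ := UniqueFactorizationMonoid.exists_reduced_factors'
        (⟨y (Fin.last n), hy _⟩ : R) g hg0
      have hynT : y (Fin.last n) = (h' : T) * yn' := (congrArg Subtype.val hyn).symm
      have hgT : (g : T) = (h' : T) * g' := (congrArg Subtype.val hgg).symm
      have hh0 : h' ≠ 0 := by
        rintro rfl
        rw [zero_mul] at hgg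
        exact hg0 hgg.symm
      have hg'0 : g' ≠ 0 := by
        rintro rfl
        rw [mul_zero] at hgg
        exact hg0 hgg.symm
      set e : T := ∑ i, (y' i : T) * t i.castSucc with he
      have h2 : c = (h' : T) * ((g' : T) * e + yn' * t (Fin.last n)) := by
        rw [h, hynT, mul_add, ← mul_assoc, ← hgT, he, Finset.mul_sum, ← mul_assoc]
        congr 1
        refine Finset.sum_congr rfl fun i _ => ?_
        rw [hyc]; ring
      obtain ⟨c', hc'⟩ := hG.good.dvd_of_coe_dvd h' ⟨c, hc⟩ hh0 ⟨_, h2⟩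
      have hcT : c = (h' : T) * c' := congrArg Subtype.val hc'
      have h3 : (c' : T) = g' * e + yn' * t (Fin.last n) :=
        (mul_cancel_left_mem_nonZeroDivisors (hG.good.coe_reg hh0)).1 (by rw [← hcT, h2])
      obtain ⟨S, C1, hS, hE1, u, hu1, hu2⟩ := two_gen H hμ hμk hG g' yn' c' hrel.symm hg'0 e
        (t (Fin.last n)) h3
      obtain ⟨S2, C2, hS2, hE2, x, hx, hxJ, -⟩ := coset_step H hμ hμk hS (-u)
        (Ideal.span (Set.range fun i => (y' i : T))) (by
          intro P hP hle
          by_cases hPC : P ∈ C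
          · obtain ⟨i, hi⟩ := hnot P hPC
            exact hi (hle (Ideal.subset_span ⟨i, rfl⟩))
          · exact hi0' (hE1.new P hP hPC _ (y' i0).2 (hle (Ideal.subset_span ⟨i0, rfl⟩))))
      rw [Ideal.mem_span_range_iff_exists_fun] at hxJ
      obtain ⟨v, hv⟩ := hxJ
      have hRS2 : R ≤ S2 := hE1.le.trans hE2.le
      obtain ⟨S3, C3, hS3, hE3, t', ht', hsum⟩ := ih S2 C2 hS2 (fun i => (y' i : T))
        (fun i => hRS2 (y' i).2) (e - u * yn' - yn' * x)
        (sub_mem (hE2.le hu1) (mul_mem (hRS2 yn'.2) hx))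
        (fun i => t i.castSucc - yn' * v i) (by
          have hx' : x = ∑ i, v i * (y' i : T) - u := by rw [hv]; ring
          rw [hx', he]
          simp only [mul_sub, Finset.sum_sub_distrib, Finset.mul_sum]
          have : ∀ i, (yn' : T) * (v i * y' i) = y' i * (yn' * v i) := fun i => by ring
          simp only [this]
          ring)
      refine ⟨S3, C3, hS3, (hE1.trans hE2).trans hE3,
        Fin.snoc t' (g' * x + (t (Fin.last n) + u * g')), ?_, ?_⟩
      · intro i
        refine Fin.lastCases ?_ (fun i => ?_) i
        · rw [Fin.snoc_last]
          have hle := hRS2.trans hE3.le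
          exact add_mem (mul_mem (hle g'.2) (hE3.le hx)) (hE3.le (hE2.le hu2))
        · rw [Fin.snoc_castSucc]
          exact ht' i
      · rw [Fin.sum_univ_castSucc]
        simp only [Fin.snoc_last, Fin.snoc_castSucc]
        have h4 : ∑ i : Fin n, y i.castSucc * t' i = g * ∑ i, (y' i : T) * t' i := by
          rw [Finset.mul_sum]
          refine Finset.sum_congr rfl fun i _ => ?_
          rw [hyc]; ring
        rw [h4, ← hsum, hynT, hgT, h2]
        ring

end Steps

end

section

section ChainUnion
variable {T : Type u} [CommRing T]

/-- union of the rings in a family of pairs -/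
noncomputable def uR (F : Set (Subring T × Set (Ideal T))) : Subring T := sSup (Prod.fst '' F)

/-- union of the sets of primes in a family of pairs -/
def uC (F : Set (Subring T × Set (Ideal T))) : Set (Ideal T) := {P | ∃ p ∈ F, P ∈ p.2}

/-- a nonempty chain of good pairs -/
structure GChain (Q0 : Ideal T) (d : ℕ) (F : Set (Subring T × Set (Ideal T))) : Prop where
  ne : F.Nonempty
  good : ∀ p ∈ F, Good Q0 d p.1 p.2
  chain : ∀ p ∈ F, ∀ q ∈ F, GExt p.1 p.2 q.1 q.2 ∨ GExt q.1 q.2 p.1 p.2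

variable {Q0 : Ideal T} {d : ℕ} {F : Set (Subring T × Set (Ideal T))}

lemma GChain.mem (hF : GChain Q0 d F) {x : T} : x ∈ uR F ↔ ∃ p ∈ F, x ∈ p.1 := by
  unfold uR
  rw [Subring.mem_sSup_of_directedOn (hF.ne.image _)]
  · simp
  · rintro _ ⟨p, hp, rfl⟩ _ ⟨q, hq, rfl⟩
    rcases hF.chain p hp q hq with h | h
    · exact ⟨q.1, ⟨q, hq, rfl⟩, h.le, le_rfl⟩
    · exact ⟨p.1, ⟨p, hp, rfl⟩, le_rfl, h.le⟩

lemma GChain.le (hF : GChain Q0 d F) {p : Subring T × Set (Ideal T)} (hp : p ∈ F) : p.1 ≤ uR F :=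
  fun _ hx => hF.mem.2 ⟨p, hp, hx⟩

lemma GChain.up (hF : GChain Q0 d F) {p : Subring T × Set (Ideal T)} (hp : p ∈ F) {x : T}
    (hx : x ∈ uR F) : ∃ q ∈ F, GExt p.1 p.2 q.1 q.2 ∧ x ∈ q.1 := by
  obtain ⟨q, hq, hxq⟩ := hF.mem.1 hx
  rcases hF.chain p hp q hq with h | h
  · exact ⟨q, hq, h, hxq⟩
  · exact ⟨p, hp, GExt.refl _ _, h.le hxq⟩

lemma GChain.ext (hF : GChain Q0 d F) {p : Subring T × Set (Ideal T)} (hp : p ∈ F) :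
    GExt p.1 p.2 (uR F) (uC F) := by
  refine ⟨hF.le hp, fun P hP => ⟨p, hp, hP⟩, ?_, ?_⟩
  · intro z hz
    refine ⟨?_, ?_, ?_⟩
    · intro h
      exact hz.ne_zero (Subtype.ext (congrArg Subtype.val h :))
    · intro h
      obtain ⟨s, hs⟩ := h.exists_right_inv
      have hs' : (z : T) * s = 1 := congrArg Subtype.val hs
      have := (hF.good p hp).unit z z.2 s hs'
      exact hz.not_isUnit (IsUnit.of_mul_eq_one ⟨s, this⟩ (Subtype.ext hs'))
    · rintro s t ⟨e, he⟩
      have he' : (s : T) * t = z * e := congrArg Subtype.val he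
      obtain ⟨q, hq, h1, hsq⟩ := hF.up hp s.2
      obtain ⟨q', hq', h2, htq⟩ := hF.up hq t.2
      obtain ⟨r, hr, h3, her⟩ := hF.up hq' e.2
      have hE := (h1.trans h2).trans h3
      have hzr := hE.prime z hz
      have hdvd : Subring.inclusion hE.le z ∣ ⟨s, h3.le (h2.le hsq)⟩ * ⟨t, h3.le htq⟩ :=
        ⟨⟨e, her⟩, Subtype.ext he'⟩
      rcases hzr.dvd_or_dvd hdvd with ⟨v, hv⟩ | ⟨v, hv⟩
      · exact Or.inl ⟨⟨v, hF.le hr v.2⟩, Subtype.ext (congrArg Subtype.val hv :)⟩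
      · exact Or.inr ⟨⟨v, hF.le hr v.2⟩, Subtype.ext (congrArg Subtype.val hv :)⟩
  · rintro P ⟨q, hq, hPq⟩ hPp r hr hrP
    rcases hF.chain p hp q hq with h | h
    · exact h.new P hPq hPp r hr hrP
    · exact absurd (h.sub hPq) hPp

lemma GChain.reg (hF : GChain Q0 d F) : ∀ r ∈ uR F, r ≠ 0 → r ∈ nonZeroDivisors T := by
  intro r hr h0
  obtain ⟨p, hp, hrp⟩ := hF.mem.1 hr
  exact (hF.good p hp).reg r hrp h0

lemma GChain.isDomain (hF : GChain Q0 d F) : IsDomain (uR F) := by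
  obtain ⟨p, hp⟩ := hF.ne
  have := (hF.good p hp).isDomain
  have : Nontrivial T := p.1.subtype_injective.nontrivial
  have : NoZeroDivisors (uR F) := ⟨by
    intro a b hab
    by_contra hcon
    push Not at hcon
    have h1 := hF.reg a a.2 (fun h => hcon.1 (Subtype.ext h))
    have h2 : (a : T) * b = 0 := by exact_mod_cast congrArg Subtype.val hab
    exact hcon.2 (Subtype.ext ((mul_right_mem_nonZeroDivisors_eq_zero_iff h1).1
      (by rw [mul_comm]; exact h2)))⟩
  exact NoZeroDivisors.to_isDomain _

lemma GChain.ufd (hF : GChain Q0 d F) : UniqueFactorizationMonoid (uR F) := by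
  have := hF.isDomain
  refine UniqueFactorizationMonoid.of_exists_prime_factors ?_
  intro a ha
  obtain ⟨p, hp, hap⟩ := hF.mem.1 a.2
  have := (hF.good p hp).ufd
  obtain ⟨f, hf, hfa⟩ := UniqueFactorizationMonoid.exists_prime_factors (⟨a, hap⟩ : p.1) (by
    intro h
    exact ha (Subtype.ext (congrArg Subtype.val h :)))
  have hE := hF.ext hp
  refine ⟨f.map (Subring.inclusion hE.le), ?_, ?_⟩
  · intro b hb
    obtain ⟨b', hb', rfl⟩ := Multiset.mem_map.1 hb
    exact hE.prime b' (hf b' hb')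
  · have := hfa.map (Subring.inclusion hE.le)
    rw [map_multiset_prod] at this
    exact this

lemma GChain.primeDown (hF : GChain Q0 d F) {z : uR F} (hz : Prime z)
    {p : Subring T × Set (Ideal T)} (hp : p ∈ F) (hzp : (z : T) ∈ p.1) :
    Prime (⟨z, hzp⟩ : p.1) := by
  have := hF.isDomain
  have := (hF.good p hp).ufd
  have hE := hF.ext hp
  have h0 : (⟨z, hzp⟩ : p.1) ≠ 0 := by
    intro h
    exact hz.ne_zero (Subtype.ext (congrArg Subtype.val h :))
  have hu : ¬ IsUnit (⟨z, hzp⟩ : p.1) := fun h => hz.not_isUnit (h.map (Subring.inclusion hE.le))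
  obtain ⟨i, hi, e, he⟩ := WfDvdMonoid.exists_irreducible_factor hu h0
  have hi' := hi.prime
  have h1 : z = Subring.inclusion hE.le i * Subring.inclusion hE.le e :=
    Subtype.ext (congrArg Subtype.val he :)
  have h2 := (hz.irreducible.isUnit_or_isUnit h1).resolve_left (hE.prime i hi').not_isUnit
  obtain ⟨s, hs⟩ := h2.exists_right_inv
  have hs' : (e : T) * s = 1 := congrArg Subtype.val hs
  have hes : IsUnit e := IsUnit.of_mul_eq_one ⟨s, (hF.good p hp).unit e e.2 s hs'⟩ (Subtype.ext hs')
  have h3 : Associated i ⟨z, hzp⟩ := by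
    rw [he]
    exact (associated_mul_unit_right i e hes)
  exact h3.prime hi'

lemma GChain.union (hF : GChain Q0 d F) : Good Q0 d (uR F) (uC F) := by
  obtain ⟨p0, hp0⟩ := hF.ne
  have hG0 := hF.good p0 hp0
  refine ⟨?_, ?_, fun P hP => ⟨p0, hp0, hG0.ass P hP⟩, ⟨p0, hp0, hG0.q0⟩, ?_, hF.reg, ?_, hF.ufd,
    ?_, ?_, ?_⟩
  · intro r hr s hs
    obtain ⟨p, hp, hrp⟩ := hF.mem.1 hr
    exact hF.le hp ((hF.good p hp).unit r hrp s hs)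
  · rintro P ⟨p, hp, hP⟩
    exact (hF.good p hp).prime P hP
  · intro r hr hrQ
    obtain ⟨p, hp, hrp⟩ := hF.mem.1 hr
    exact (hF.good p hp).zero r hrp hrQ
  · rintro P ⟨p, hp, hP⟩
    rcases (hF.good p hp).bound P hP with h | h | ⟨h, r, hr, h'⟩
    · exact Or.inl h
    · exact Or.inr (Or.inl h)
    · exact Or.inr (Or.inr ⟨h, r, hF.le hp hr, h'⟩)
  · intro z hz P hP
    obtain ⟨p, hp, hzp⟩ := hF.mem.1 z.2
    exact ⟨p, hp, (hF.good p hp).assz _ (hF.primeDown hz hp hzp) P hP⟩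
  · intro z hz
    obtain ⟨p, hp, hzp⟩ := hF.mem.1 z.2
    obtain ⟨Q, h1, h2, h3⟩ := (hF.good p hp).qz _ (hF.primeDown hz hp hzp)
    exact ⟨Q, ⟨p, hp, h1⟩, h2, h3⟩
  · rintro P ⟨p, hp, hP⟩ z r hz hzP hrP
    obtain ⟨q, hq, h1, hzq⟩ := hF.up hp z.2
    obtain ⟨q', hq', h2, hrq⟩ := hF.up hq r.2
    have hz' := hF.primeDown hz hq' (h2.le hzq)
    obtain ⟨v, hv⟩ := (hF.good q' hq').cut P (h2.sub (h1.sub hP)) _ ⟨r, hrq⟩ hz' hzP hrP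
    exact ⟨⟨v, hF.le hq' v.2⟩, Subtype.ext (congrArg Subtype.val hv :)⟩

end ChainUnion

section Tower
variable {T : Type u} [CommRing T] [IsNoetherianRing T] [IsLocalRing T]

/-- a bound for the size of a pair -/
noncomputable def psize (p : Subring T × Set (Ideal T)) : Cardinal.{u} := max ℵ₀ (max #p.1 #p.2)

/-- what is required of one step of the construction -/
structure StepSpec (Q0 : Ideal T) (d : ℕ) (k : List T × T) (p q : Subring T × Set (Ideal T)) :
    Prop where
  goodC : GoodC Q0 d (psize p) q.1 q.2
  ext : GExt p.1 p.2 q.1 q.2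
  coset : (∀ P ∈ p.2, ¬ Ideal.span {a | a ∈ k.1} ≤ P) →
    ∃ x ∈ q.1, x - k.2 ∈ Ideal.span {a | a ∈ k.1} ∧ ∀ P ∈ p.2, x ∉ P
  closing : (∀ a ∈ k.1, a ∈ p.1) → k.2 ∈ p.1 → k.2 ∈ Ideal.span {a | a ∈ k.1} →
    k.2 ∈ Submodule.span q.1 {a | a ∈ k.1}

variable {Q0 : Ideal T} {d : ℕ}

lemma step_exists (H : Hyp T d) (k : List T × T) (p : Subring T × Set (Ideal T))
    (hp : Good Q0 d p.1 p.2) (hsize : psize p < #(ResidueField T)) : ∃ q, StepSpec Q0 d k p q := by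
  obtain ⟨l, c⟩ := k
  have hμ : ℵ₀ ≤ psize p := le_max_left _ _
  have hG : GoodC Q0 d (psize p) p.1 p.2 :=
    ⟨hp, (le_max_left _ _).trans (le_max_right _ _), (le_max_right _ _).trans (le_max_right _ _)⟩
  obtain ⟨S, C', hS, hE, hx⟩ : ∃ (S : Subring T) (C' : Set (Ideal T)), GoodC Q0 d (psize p) S C' ∧
      GExt p.1 p.2 S C' ∧ ((∀ P ∈ p.2, ¬ Ideal.span {a | a ∈ l} ≤ P) →
        ∃ x ∈ S, x - c ∈ Ideal.span {a | a ∈ l} ∧ ∀ P ∈ p.2, x ∉ P) := by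
    by_cases hJ : ∀ P ∈ p.2, ¬ Ideal.span {a | a ∈ l} ≤ P
    · obtain ⟨S, C', h1, h2, h3⟩ := coset_step H hμ hsize hG c _ hJ
      exact ⟨S, C', h1, h2, fun _ => h3⟩
    · exact ⟨p.1, p.2, hG, GExt.refl _ _, fun h => absurd h hJ⟩
  have hrange : Set.range l.get = {a | a ∈ l} := by
    ext a; simp [List.mem_iff_get]
  by_cases hc : (∀ a ∈ l, a ∈ p.1) ∧ c ∈ p.1 ∧ c ∈ Ideal.span {a | a ∈ l}
  · obtain ⟨hl, hcp, hcs⟩ := hc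
    rw [← hrange, Ideal.mem_span_range_iff_exists_fun] at hcs
    obtain ⟨t, ht⟩ := hcs
    obtain ⟨S2, C2, hS2, hE2, t', ht', hsum⟩ := closing_step H hμ hsize l.length S C' hS l.get
      (fun i => hE.le (hl _ (List.get_mem _ _))) c (hE.le hcp) t (by
        rw [← ht]; exact Finset.sum_congr rfl fun i _ => mul_comm _ _)
    refine ⟨(S2, C2), hS2, hE.trans hE2, fun hJ => ?_, fun _ _ _ => ?_⟩
    · obtain ⟨x, h1, h2, h3⟩ := hx hJ
      exact ⟨x, hE2.le h1, h2, h3⟩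
    · change c ∈ _
      rw [hsum]
      refine Submodule.sum_mem _ fun i _ => ?_
      rw [mul_comm]
      exact Submodule.smul_mem _ (⟨t' i, ht' i⟩ : S2) (Submodule.subset_span (List.get_mem l i))
  · exact ⟨(S, C'), hS, hE, hx, fun h1 h2 h3 => absurd ⟨h1, h2, h3⟩ hc⟩

open Classical in
/-- one step -/
noncomputable def gstep (Q0 : Ideal T) (d : ℕ) (k : List T × T) (p : Subring T × Set (Ideal T)) :
    Subring T × Set (Ideal T) :=
  if h : ∃ q, StepSpec Q0 d k p q then h.choose else p

lemma gstep_spec {k : List T × T} {p : Subring T × Set (Ideal T)} (h : ∃ q, StepSpec Q0 d k p q) :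
    StepSpec Q0 d k p (gstep Q0 d k p) := by
  unfold gstep
  rw [dif_pos h]
  exact h.choose_spec

/-- the transfinite tower -/
noncomputable def tower {ι : Type u} [LinearOrder ι] [WellFoundedLT ι] (Q0 : Ideal T) (d : ℕ)
    (base : Subring T × Set (Ideal T)) (e : ι → List T × T) : ι → Subring T × Set (Ideal T) :=
  (wellFounded_lt (α := ι)).fix fun a G =>
    gstep Q0 d (e a) (uR (insert base {q | ∃ b, ∃ h : b < a, q = G b h}),
      uC (insert base {q | ∃ b, ∃ h : b < a, q = G b h}))

/-- the stages below `a` -/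
def below {ι : Type u} [LinearOrder ι] (base : Subring T × Set (Ideal T))
    (G : ι → Subring T × Set (Ideal T)) (a : ι) : Set (Subring T × Set (Ideal T)) :=
  insert base {q | ∃ b, b < a ∧ q = G b}

lemma tower_eq {ι : Type u} [LinearOrder ι] [WellFoundedLT ι] (Q0 : Ideal T) (d : ℕ)
    (base : Subring T × Set (Ideal T)) (e : ι → List T × T) (a : ι) :
    tower Q0 d base e a = gstep Q0 d (e a) (uR (below base (tower Q0 d base e) a),
      uC (below base (tower Q0 d base e) a)) := by
  conv_lhs => unfold tower
  rw [WellFounded.fix_eq]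
  simp only [exists_prop]
  rfl

theorem tower_main (H : Hyp T d) {ι : Type u} [LinearOrder ι] [WellFoundedLT ι]
    (hι : ∀ a : ι, #(Set.Iio a) < #(ResidueField T)) (hk : ℵ₀ < #(ResidueField T))
    (base : Subring T × Set (Ideal T)) (hbase : GoodC Q0 d ℵ₀ base.1 base.2)
    (e : ι → List T × T) (a : ι) :
    GChain Q0 d (below base (tower Q0 d base e) a) ∧
    StepSpec Q0 d (e a) (uR (below base (tower Q0 d base e) a),
      uC (below base (tower Q0 d base e) a)) (tower Q0 d base e a) ∧
    psize (tower Q0 d base e a) ≤ max ℵ₀ #(Set.Iio a) := by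
  set G := tower Q0 d base e with hGdef
  induction a using WellFoundedLT.induction with
  | ind a ih =>
  have hmem : ∀ b, ∀ q, q ∈ below base G b ↔ q = base ∨ ∃ c, c < b ∧ q = G c := by
    intro b q; rfl
  have hfrom : ∀ b < a, ∀ q ∈ below base G b, GExt q.1 q.2 (G b).1 (G b).2 := fun b hb q hq =>
    ((ih b hb).1.ext hq).trans (ih b hb).2.1.ext
  have hch : GChain Q0 d (below base G a) := by
    refine ⟨⟨base, Or.inl rfl⟩, ?_, ?_⟩
    · rintro q (rfl | ⟨b, hb, rfl⟩)
      · exact hbase.good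
      · exact (ih b hb).2.1.goodC.good
    · rintro p (rfl | ⟨b, hb, rfl⟩) q (rfl | ⟨c, hc, rfl⟩)
      · exact Or.inl (GExt.refl _ _)
      · exact Or.inl (hfrom c hc _ (Or.inl rfl))
      · exact Or.inr (hfrom b hb _ (Or.inl rfl))
      · rcases lt_trichotomy b c with h | rfl | h
        · exact Or.inl (hfrom c hc _ (Or.inr ⟨b, h, rfl⟩))
        · exact Or.inl (GExt.refl _ _)
        · exact Or.inr (hfrom b hb _ (Or.inr ⟨c, h, rfl⟩))
  set μ : Cardinal.{u} := max ℵ₀ #(Set.Iio a) with hμ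
  have hμ0 : ℵ₀ ≤ μ := le_max_left _ _
  have hsz : ∀ b < a, psize (G b) ≤ μ := fun b hb => (ih b hb).2.2.trans
    (max_le_max le_rfl (Cardinal.mk_le_mk_of_subset (fun c hc => lt_trans hc hb)))
  have hsR : #(uR (below base G a)) ≤ μ := by
    have : ((uR (below base G a) : Subring T) : Set T) ⊆
        (base.1 : Set T) ∪ ⋃ b ∈ Set.Iio a, ((G b).1 : Set T) := by
      intro x hx
      obtain ⟨p, (rfl | ⟨b, hb, rfl⟩), hxp⟩ := hch.mem.1 hx
      · exact Or.inl hxp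
      · exact Or.inr (Set.mem_biUnion hb hxp)
    refine (Cardinal.mk_le_mk_of_subset this).trans (mk_union_le_of _ _ μ hμ0
      (hbase.hR.trans hμ0) (mk_biUnion_le_of _ _ μ hμ0 (le_max_right _ _) fun b hb => ?_))
    exact ((le_max_left _ _).trans (le_max_right _ _)).trans (hsz b hb)
  have hsC : #(uC (below base G a)) ≤ μ := by
    have : uC (below base G a) ⊆ base.2 ∪ ⋃ b ∈ Set.Iio a, (G b).2 := by
      rintro P ⟨p, (rfl | ⟨b, hb, rfl⟩), hP⟩
      · exact Or.inl hP
      · exact Or.inr (Set.mem_biUnion hb hP)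
    refine (Cardinal.mk_le_mk_of_subset this).trans (mk_union_le_of _ _ μ hμ0
      (hbase.hC.trans hμ0) (mk_biUnion_le_of _ _ μ hμ0 (le_max_right _ _) fun b hb => ?_))
    exact ((le_max_right _ _).trans (le_max_right _ _)).trans (hsz b hb)
  have hsU : psize (uR (below base G a), uC (below base G a)) ≤ μ := max_le hμ0 (max_le hsR hsC)
  have hspec : StepSpec Q0 d (e a) (uR (below base G a), uC (below base G a)) (G a) := by
    rw [hGdef, tower_eq, ← hGdef]
    exact gstep_spec (step_exists H (e a) _ hch.union (hsU.trans_lt (max_lt hk (hι a))))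
  exact ⟨hch, hspec, max_le hμ0 (max_le (hspec.goodC.hR.trans hsU) (hspec.goodC.hC.trans hsU))⟩

/-- The final ring. -/
theorem exists_final (H : Hyp T d) (hk : ℵ₀ < #(ResidueField T)) (hcard : #T = #(ResidueField T))
    (base : Subring T × Set (Ideal T)) (hbase : GoodC Q0 d ℵ₀ base.1 base.2) :
    ∃ (A : Subring T) (CA : Set (Ideal T)), Good Q0 d A CA ∧
      (∀ a ∈ A, ∀ (u : T) (J : Ideal T), (∀ P ∈ CA, ¬ J ≤ P) →
        ∃ (R : Subring T) (C : Set (Ideal T)), Good Q0 d R C ∧ R ≤ A ∧ a ∈ R ∧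
          ∃ x ∈ A, x - u ∈ J ∧ ∀ P ∈ C, x ∉ P) ∧
      (∀ (l : List T) (c : T), (∀ a ∈ l, a ∈ A) → c ∈ A → c ∈ Ideal.span {a | a ∈ l} →
        c ∈ Submodule.span A {a | a ∈ l}) := by
  let ι := (#(ResidueField T)).ord.ToType
  have hιk : #ι = #(ResidueField T) := Cardinal.mk_ord_toType _
  have hι : ∀ a : ι, #(Set.Iio a) < #(ResidueField T) := fun a => Cardinal.mk_Iio_toType_ord_lt a
  have : Infinite T := Cardinal.infinite_iff.2 (hcard ▸ hk.le)
  have hTask : #(List T × T) = #ι := by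
    simp only [Cardinal.mk_prod, Cardinal.lift_id, Cardinal.mk_list_eq_mk]
    rw [hcard, hιk, Cardinal.mul_eq_self hk.le]
  have hTask2 : #ι = #((List T × T) × ι) := by
    rw [Cardinal.mk_prod (List T × T) ι, Cardinal.lift_id, Cardinal.lift_id, hTask, hιk,
      Cardinal.mul_eq_self hk.le]
  obtain ⟨φ⟩ := Cardinal.eq.1 hTask2
  let e : ι → List T × T := fun a => (φ a).1
  have hcof : ∀ (k : List T × T) (a : ι), ∃ b, a < b ∧ e b = k := by
    intro k a
    by_contra hcon
    push Not at hcon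
    have h1 : #ι ≤ #(Set.Iic a) := by
      refine Cardinal.mk_le_of_injective (f := fun i : ι => (⟨φ.symm (k, i), ?_⟩ : Set.Iic a)) ?_
      · by_contra h
        exact hcon (φ.symm (k, i)) (not_le.1 h) (by simp [e])
      · intro i j hij
        have := congrArg Subtype.val hij
        simpa using this
    have h2 : #(Set.Iic a) ≤ #(Set.Iio a) + 1 := by
      have : Set.Iic a ⊆ insert a (Set.Iio a) := fun b hb => by
        rcases eq_or_lt_of_le (Set.mem_Iic.1 hb) with h | h
        · exact Or.inl h
        · exact Or.inr h
      exact (Cardinal.mk_le_mk_of_subset this).trans Cardinal.mk_insert_le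
    have h3 : #(Set.Iio a) + 1 < #ι := by
      rw [hιk]
      exact Cardinal.add_lt_of_lt hk.le (hι a) (Cardinal.one_lt_aleph0.trans hk)
    exact absurd (h1.trans h2) (not_le.2 h3)
  let G := tower Q0 d base e
  have hM := tower_main H hι hk base hbase e
  have hext : ∀ a b, a < b → GExt (G a).1 (G a).2 (G b).1 (G b).2 := fun a b h =>
    ((hM b).1.ext (Or.inr ⟨a, h, rfl⟩)).trans (hM b).2.1.ext
  have hne : Nonempty ι := Cardinal.mk_ne_zero_iff.1 (by
    rw [hιk]; exact (Cardinal.aleph0_pos.trans hk).ne')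
  have hF : GChain Q0 d (Set.range G) := by
    refine ⟨Set.range_nonempty _, ?_, ?_⟩
    · rintro _ ⟨a, rfl⟩
      exact (hM a).2.1.goodC.good
    · rintro _ ⟨a, rfl⟩ _ ⟨b, rfl⟩
      rcases lt_trichotomy a b with h | rfl | h
      · exact Or.inl (hext _ _ h)
      · exact Or.inl (GExt.refl _ _)
      · exact Or.inr (hext _ _ h)
  -- the pair used at stage b
  have hstage : ∀ b, GExt (uR (below base G b)) (uC (below base G b)) (uR (Set.range G))
      (uC (Set.range G)) := fun b => (hM b).2.1.ext.trans (hF.ext ⟨b, rfl⟩)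
  have hin : ∀ a b, a < b → (G a).1 ≤ uR (below base G b) := fun a b h =>
    (hM b).1.le (Or.inr ⟨a, h, rfl⟩)
  refine ⟨uR (Set.range G), uC (Set.range G), hF.union, ?_, ?_⟩
  · intro a ha u J hJ
    obtain ⟨_, ⟨i, rfl⟩, hai⟩ := hF.mem.1 ha
    obtain ⟨s, hs⟩ := (IsNoetherian.noetherian J : J.FG)
    have hs' : Ideal.span {a | a ∈ s.toList} = J := by
      rw [← hs]
      congr 1
      ext; simp
    obtain ⟨b, hib, hb⟩ := hcof (s.toList, u) i
    have hsp := (hM b).2.1.coset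
    rw [hb] at hsp
    simp only [hs'] at hsp
    obtain ⟨x, h1, h2, h3⟩ := hsp fun P hP => hJ P ((hstage b).sub hP)
    exact ⟨_, _, (hM b).1.union, (hstage b).le, hin i b hib hai, x, hF.le ⟨b, rfl⟩ h1, h2, h3⟩
  · intro l c hl hc hcl
    have hcommon : ∃ i, c ∈ (G i).1 ∧ ∀ a ∈ l, a ∈ (G i).1 := by
      clear hcl
      induction l with
      | nil =>
        obtain ⟨_, ⟨i, rfl⟩, hai⟩ := hF.mem.1 hc
        exact ⟨i, hai, by simp⟩
      | cons a l ih =>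
        obtain ⟨i, h1, h2⟩ := ih fun b hb => hl b (List.mem_cons_of_mem _ hb)
        obtain ⟨_, ⟨j, rfl⟩, hE, haj⟩ := hF.up (p := G i) ⟨i, rfl⟩ (hl a List.mem_cons_self)
        refine ⟨j, hE.le h1, ?_⟩
        intro b hb
        rcases List.mem_cons.1 hb with rfl | hb
        · exact haj
        · exact hE.le (h2 b hb)
    obtain ⟨i, h1, h2⟩ := hcommon
    obtain ⟨b, hib, hb⟩ := hcof (l, c) i
    have hsp := (hM b).2.1.closing
    rw [hb] at hsp
    have h3 := hsp (fun a ha => hin i b hib (h2 a ha)) (hin i b hib h1) hcl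
    have hle : (G b).1 ≤ uR (Set.range G) := hF.le ⟨b, rfl⟩
    refine Submodule.span_induction (p := fun x _ => x ∈ Submodule.span (uR (Set.range G))
      {a | a ∈ l}) ?_ ?_ ?_ ?_ h3
    · intro x hx; exact Submodule.subset_span hx
    · exact zero_mem _
    · intro x y _ _ hx hy; exact add_mem hx hy
    · intro r x _ hx
      exact Submodule.smul_mem _ (⟨r, hle r.2⟩ : uR (Set.range G)) hx

end Tower

end

section

section ZRing
variable {T : Type u} [CommRing T]

/-- the rational numbers inside `T` -/
def zRing (T : Type u) [CommRing T] : Subring T where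
  carrier := {s | ∃ n m : ℤ, n ≠ 0 ∧ (n : T) * s = m}
  mul_mem' := by
    rintro s t ⟨n, m, hn, h⟩ ⟨n', m', hn', h'⟩
    exact ⟨n * n', m * m', mul_ne_zero hn hn', by push_cast; rw [← h, ← h']; ring⟩
  one_mem' := ⟨1, 1, one_ne_zero, by simp⟩
  add_mem' := by
    rintro s t ⟨n, m, hn, h⟩ ⟨n', m', hn', h'⟩
    exact ⟨n * n', m * n' + m' * n, mul_ne_zero hn hn', by push_cast; rw [← h, ← h']; ring⟩
  zero_mem' := ⟨1, 0, one_ne_zero, by simp⟩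
  neg_mem' := by
    rintro s ⟨n, m, hn, h⟩
    exact ⟨n, -m, hn, by push_cast; rw [← h]; ring⟩

lemma mem_zRing {s : T} : s ∈ zRing T ↔ ∃ n m : ℤ, n ≠ 0 ∧ (n : T) * s = m := Iff.rfl

lemma zRing_countable (hint : ∀ n : ℤ, n ≠ 0 → ((n : ℤ) : T) ∈ nonZeroDivisors T)
    : Countable (zRing T) := by
  have hch : ∀ s : zRing T, ∃ n m : ℤ, n ≠ 0 ∧ (n : T) * s = m := fun s => s.2
  choose n m hn h using hch
  refine Function.Injective.countable (f := fun s => (n s, m s)) ?_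
  intro s t hst
  simp only [Prod.mk.injEq] at hst
  have h1 := h s
  rw [hst.1, hst.2, ← h t] at h1
  exact Subtype.ext ((mul_cancel_left_mem_nonZeroDivisors (hint _ (hn t))).1 h1)

lemma zRing_div (hint : ∀ n : ℤ, n ≠ 0 → ((n : ℤ) : T) ∈ nonZeroDivisors T)
    {n : ℤ} (hn : n ≠ 0) {q : T} (h : (n : T) * q ∈ zRing T) : q ∈ zRing T := by
  obtain ⟨k, m, hk, h⟩ := h
  exact ⟨k * n, m, mul_ne_zero hk hn, by push_cast; rw [← h]; ring⟩

lemma zRing_core (hint : ∀ n : ℤ, n ≠ 0 → ((n : ℤ) : T) ∈ nonZeroDivisors T)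
    {l : ℤ} (hl : Prime l) {P : Ideal T} (hP : P.IsPrime) (hlP : (l : T) ∈ P)
    (s : zRing T) (hs : (s : T) ∈ P) : (l : zRing T) ∣ s := by
  obtain ⟨n, m, hn, h⟩ := s.2
  obtain ⟨g, n', m', rfl, rfl, hcop⟩ : ∃ g n' m' : ℤ, n = g * n' ∧ m = g * m' ∧ IsCoprime n' m' := by
    refine ⟨gcd n m, _, _, (Int.mul_ediv_cancel' (gcd_dvd_left n m)).symm,
      (Int.mul_ediv_cancel' (gcd_dvd_right n m)).symm, ?_⟩
    exact isCoprime_div_gcd_div_gcd_of_gcd_ne_zero (fun h => hn ((gcd_eq_zero_iff _ _).1 h).1)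
  have hg : g ≠ 0 := left_ne_zero_of_mul hn
  have h1 : (n' : T) * s = m' := by
    apply (mul_cancel_left_mem_nonZeroDivisors (hint g hg)).1
    push_cast at h
    rw [← h]; ring
  have hm : l ∣ m' := by
    by_contra hcon
    obtain ⟨u, v, huv⟩ := (hl.irreducible.coprime_iff_not_dvd).2 hcon
    apply hP.ne_top
    rw [Ideal.eq_top_iff_one]
    have : (1 : T) = u * l + v * m' := by exact_mod_cast congrArg (Int.cast (R := T)) huv.symm
    rw [this]
    refine P.add_mem (P.mul_mem_left _ hlP) (P.mul_mem_left _ ?_)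
    rw [← h1]; exact P.mul_mem_left _ hs
  have hn' : ¬ l ∣ n' := fun h => hl.not_isUnit (hcop.isUnit_of_dvd' h hm)
  obtain ⟨u, v, huv⟩ := (hl.irreducible.coprime_iff_not_dvd).2 hn'
  obtain ⟨e, rfl⟩ := hm
  have h2 : (s : T) = l * (u * s + v * e) := by
    have : (u * l + v * n' : T) = 1 := by exact_mod_cast congrArg (Int.cast (R := T)) huv
    push_cast at h1
    linear_combination (-(s : T)) * this + v * h1
  refine ⟨⟨u * s + v * e, zRing_div hint hl.ne_zero (by rw [← h2]; exact s.2)⟩, ?_⟩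
  apply Subtype.ext
  push_cast
  exact h2

lemma zRing_reg (hint : ∀ n : ℤ, n ≠ 0 → ((n : ℤ) : T) ∈ nonZeroDivisors T)
    (r : T) (hr : r ∈ zRing T) (h0 : r ≠ 0) : r ∈ nonZeroDivisors T := by
  obtain ⟨n, m, hn, h⟩ := hr
  have hm : m ≠ 0 := by
    rintro rfl
    rw [Int.cast_zero] at h
    exact h0 ((mul_left_mem_nonZeroDivisors_eq_zero_iff (hint n hn)).1 h)
  have := hint m hm
  rw [← h] at this
  exact (mul_mem_nonZeroDivisors.1 this).2

variable [Nontrivial T]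

lemma zRing_prime (hint : ∀ n : ℤ, n ≠ 0 → ((n : ℤ) : T) ∈ nonZeroDivisors T)
    {l : ℤ} (hl : Prime l) {P : Ideal T} (hP : P.IsPrime) (hlP : (l : T) ∈ P) :
    Prime (l : zRing T) := by
  refine ⟨?_, ?_, ?_⟩
  · intro h
    have : (l : T) = 0 := by simpa using congrArg Subtype.val h
    have h' := hint l hl.ne_zero
    rw [this] at h'
    exact zero_notMem_nonZeroDivisors h'
  · intro h
    have := h.map (zRing T).subtype
    simp only [map_intCast] at this
    exact hP.ne_top (Ideal.eq_top_of_isUnit_mem _ hlP this)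
  · intro a b hab
    have h1 : (a : T) * b ∈ P := by
      have := map_dvd (zRing T).subtype hab
      simp only [map_intCast, map_mul, Subring.subtype_apply] at this
      exact P.mem_of_dvd this hlP
    rcases hP.mem_or_mem h1 with h | h
    · exact Or.inl (zRing_core hint hl hP hlP a h)
    · exact Or.inr (zRing_core hint hl hP hlP b h)

lemma zRing_isDomain (hint : ∀ n : ℤ, n ≠ 0 → ((n : ℤ) : T) ∈ nonZeroDivisors T)
    : IsDomain (zRing T) := by
  have : NoZeroDivisors (zRing T) := ⟨by
    intro a b hab
    by_contra hcon
    push Not at hcon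
    have h1 := zRing_reg hint a a.2 (fun h => hcon.1 (Subtype.ext h))
    have h2 : (a : T) * b = 0 := by exact_mod_cast congrArg Subtype.val hab
    exact hcon.2 (Subtype.ext ((mul_right_mem_nonZeroDivisors_eq_zero_iff h1).1
      (by rw [mul_comm]; exact h2)))⟩
  exact NoZeroDivisors.to_isDomain _

lemma zRing_unit (hint : ∀ n : ℤ, n ≠ 0 → ((n : ℤ) : T) ∈ nonZeroDivisors T)
    (r : T) (hr : r ∈ zRing T) (s : T) (h : r * s = 1) : s ∈ zRing T := by
  obtain ⟨n, m, hn, h'⟩ := hr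
  have hm : m ≠ 0 := by
    rintro rfl
    rw [Int.cast_zero] at h'
    rw [(mul_left_mem_nonZeroDivisors_eq_zero_iff (hint n hn)).1 h', zero_mul] at h
    exact zero_ne_one h
  exact ⟨m, n, hm, by rw [← h', mul_assoc, h, mul_one]⟩

lemma zRing_exists_int (hint : ∀ n : ℤ, n ≠ 0 → ((n : ℤ) : T) ∈ nonZeroDivisors T)
    (q : Ideal (zRing T)) (hq : q.IsPrime) (hq0 : q ≠ ⊥) :
    ∃ l : ℤ, Prime l ∧ (l : zRing T) ∈ q := by
  obtain ⟨s, hs, hs0⟩ := Submodule.exists_mem_ne_zero_of_ne_bot hq0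
  obtain ⟨n, m, hn, h⟩ := s.2
  have h1 : (m : zRing T) ∈ q := by
    have : (m : zRing T) = n * s := Subtype.ext (by push_cast; exact h.symm)
    rw [this]
    exact q.mul_mem_left _ hs
  have hm : m ≠ 0 := by
    rintro rfl
    rw [Int.cast_zero] at h
    exact hs0 (Subtype.ext ((mul_left_mem_nonZeroDivisors_eq_zero_iff (hint n hn)).1 h))
  have h2 : (q.comap (Int.castRingHom (zRing T))).IsPrime := Ideal.comap_isPrime _ _
  obtain ⟨z, hz, hz'⟩ := h2.exists_mem_prime_of_ne_bot (by
    intro h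
    have : m ∈ q.comap (Int.castRingHom (zRing T)) := h1
    rw [h, Ideal.mem_bot] at this
    exact hm this)
  exact ⟨z, hz', hz⟩

variable [IsLocalRing T]

lemma zRing_mem_max (hint : ∀ n : ℤ, n ≠ 0 → ((n : ℤ) : T) ∈ nonZeroDivisors T)
    (z : zRing T) (hz : ¬ IsUnit z) : (z : T) ∈ maximalIdeal T := by
  rw [mem_maximalIdeal, mem_nonunits_iff]
  intro h
  obtain ⟨s, hs⟩ := h.exists_right_inv
  exact hz (IsUnit.of_mul_eq_one ⟨s, zRing_unit hint z z.2 s hs⟩ (Subtype.ext hs))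

lemma zRing_ufd (hint : ∀ n : ℤ, n ≠ 0 → ((n : ℤ) : T) ∈ nonZeroDivisors T)
    : UniqueFactorizationMonoid (zRing T) := by
  have := zRing_isDomain hint
  rw [UniqueFactorizationMonoid.iff_exists_prime_mem_of_isPrime]
  intro q hq hq0
  obtain ⟨l, hl, hlq⟩ := zRing_exists_int hint q hq0 hq
  have h1 : ((l : zRing T) : T) ∈ maximalIdeal T := zRing_mem_max hint _ (fun h =>
    hq0.ne_top (Ideal.eq_top_of_isUnit_mem _ hlq h))
  refine ⟨l, hlq, zRing_prime hint hl (P := maximalIdeal T) inferInstance (by simpa using h1)⟩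

lemma zRing_cut (hint : ∀ n : ℤ, n ≠ 0 → ((n : ℤ) : T) ∈ nonZeroDivisors T)
    (z r : zRing T) (hz : Prime z) {P : Ideal T} (hP : P.IsPrime) (hzP : (z : T) ∈ P)
    (hrP : (r : T) ∈ P) : z ∣ r := by
  obtain ⟨l, hl, hlq⟩ := zRing_exists_int hint (Ideal.span {z})
    ((Ideal.span_singleton_prime hz.ne_zero).2 hz)
    (by rw [Ne, Ideal.span_singleton_eq_bot]; exact hz.ne_zero)
  rw [Ideal.mem_span_singleton] at hlq
  have h1 := map_dvd (zRing T).subtype hlq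
  simp only [map_intCast, Subring.subtype_apply] at h1
  exact hlq.trans (zRing_core hint hl hP (P.mem_of_dvd h1 hzP) r hrP)

end ZRing

section Base
variable {T : Type u} [CommRing T] [IsLocalRing T] [IsNoetherianRing T]

lemma exists_base {d t : ℕ} (H : Hyp T d)
    (hint : ∀ n : ℤ, n ≠ 0 → ((n : ℤ) : T) ∈ nonZeroDivisors T)
    (hk : ℵ₀ < #(ResidueField T)) (ht : (t : ℕ∞) < (maximalIdeal T).height) :
    ∃ Q0 : Ideal T, Q0.IsPrime ∧ Q0.height = t ∧
      ∃ base : Subring T × Set (Ideal T), GoodC Q0 d ℵ₀ base.1 base.2 := by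
  obtain ⟨Q0, hQ0, hQ0h, -, hQ0N⟩ := exists_prime_height (T := T)
    (Set.range (fun n : {n : ℤ // n ≠ 0} => ((n : ℤ) : T))) ℵ₀ le_rfl hk
    (by rw [Cardinal.mk_le_aleph0_iff]; exact (Set.countable_range _).to_subtype) 0 ∅ (by simp) (by simp)
    (by
      intro Q hQ
      rw [Finset.coe_empty, Ideal.span_empty] at hQ
      have := hQ.1.1
      refine ⟨?_, ?_⟩
      · exact_mod_cast Ideal.height_eq_zero_iff.2 hQ
      · rintro _ ⟨n, rfl⟩ hn
        exact Set.disjoint_left.1 (Ideal.disjoint_nonZeroDivisors_of_mem_minimalPrimes hQ) hn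
          (hint _ n.2))
    t (Nat.zero_le _) ht
  have hQz : ∀ z : zRing T, Prime z → ∃ Q : Ideal T, Q.IsPrime ∧ Q.height = d ∧ (z : T) ∈ Q := by
    intro z hz
    obtain ⟨Q, h1, h2, h3, -⟩ := exists_prime_height_of_regular (∅ : Set T) ℵ₀ le_rfl hk (by simp)
      (z : T) (zRing_reg hint z z.2 (fun h => hz.ne_zero (Subtype.ext h)))
      (zRing_mem_max hint z hz.not_isUnit) (by simp) d H.hd1 H.hdim
    exact ⟨Q, h1, h2, h3⟩
  choose! Qz hQz1 hQz2 hQz3 using hQz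
  have := zRing_countable hint
  let C0 : Set (Ideal T) := (associatedPrimes T T ∪ {Q0}) ∪
    ⋃ z ∈ {z : zRing T | Prime z}, ({P | AssDiv (z : T) P} ∪ {Qz z})
  have hcases : ∀ P ∈ C0, P.IsPrime ∧ (P ∈ associatedPrimes T T ∨ P = Q0 ∨
    (P.height ≤ d ∧ ∃ r ∈ zRing T, r ≠ 0 ∧ r ∈ P)) := by
    rintro P ((hP | hP) | hP)
    · exact ⟨hP.1, Or.inl hP⟩
    · rw [Set.mem_singleton_iff] at hP
      subst hP
      exact ⟨hQ0, Or.inr (Or.inl rfl)⟩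
    · simp only [Set.mem_iUnion] at hP
      obtain ⟨z, hz, hP | hP⟩ := hP
      · have h0 : (z : T) ≠ 0 := fun h => hz.ne_zero (Subtype.ext h)
        exact ⟨hP.1, Or.inr (Or.inr ⟨H.hreg _ (zRing_reg hint z z.2 h0) P hP, z, z.2, h0, hP.mem⟩)⟩
      · rw [Set.mem_singleton_iff] at hP
        subst hP
        have h0 : (z : T) ≠ 0 := fun h => hz.ne_zero (Subtype.ext h)
        exact ⟨hQz1 z hz, Or.inr (Or.inr ⟨(hQz2 z hz).le, z, z.2, h0, hQz3 z hz⟩)⟩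
  refine ⟨Q0, hQ0, hQ0h, (zRing T, C0), ⟨?_, ?_, ?_⟩⟩
  · exact
    { unit := zRing_unit hint
      prime := fun P hP => (hcases P hP).1
      ass := fun P hP => Or.inl (Or.inl hP)
      q0 := Or.inl (Or.inr rfl)
      zero := by
        rintro r ⟨n, m, hn, h⟩ hr
        by_contra h0
        have hm : m ≠ 0 := by
          rintro rfl
          rw [Int.cast_zero] at h
          exact h0 ((mul_left_mem_nonZeroDivisors_eq_zero_iff (hint n hn)).1 h)
        exact hQ0N _ ⟨⟨m, hm⟩, rfl⟩ (by
          show (m : T) ∈ Q0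
          rw [← h]; exact Q0.mul_mem_left _ hr)
      reg := zRing_reg hint
      bound := fun P hP => (hcases P hP).2
      ufd := zRing_ufd hint
      assz := fun z hz P hP => Or.inr (by
        simp only [Set.mem_iUnion]
        exact ⟨z, hz, Or.inl hP⟩)
      qz := fun z hz => ⟨Qz z, Or.inr (by
        simp only [Set.mem_iUnion]
        exact ⟨z, hz, Or.inr rfl⟩), hQz2 z hz, hQz3 z hz⟩
      cut := fun P hP z r hz hzP hrP => zRing_cut hint z r hz (hcases P hP).1 hzP hrP }
  · exact Cardinal.mk_le_aleph0_iff.2 this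
  · refine Cardinal.mk_le_aleph0_iff.2 (Set.Countable.to_subtype ?_)
    refine ((associatedPrimes.finite T T).countable.union (Set.countable_singleton _)).union ?_
    refine Set.Countable.biUnion (Set.to_countable _) fun z _ => ?_
    exact (assDiv_finite _).countable.union (Set.countable_singleton _)

end Base

section Uncountable
variable {T : Type u} [CommRing T] [IsLocalRing T] [IsNoetherianRing T]
  [IsAdicComplete (maximalIdeal T) T]

lemma max_pow_ne (hdim : 0 < (maximalIdeal T).height) (n : ℕ) :
    ∃ a ∈ maximalIdeal T ^ n, a ∉ maximalIdeal T ^ (n + 1) := by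
  by_contra hcon
  push Not at hcon
  have h1 : maximalIdeal T ^ n ≤ maximalIdeal T • maximalIdeal T ^ n := by
    intro a ha
    have := hcon a ha
    rwa [pow_succ'] at this
  have h2 := Submodule.eq_bot_of_le_smul_of_le_jacobson_bot (maximalIdeal T) (maximalIdeal T ^ n)
    (IsNoetherian.noetherian _) h1 (IsLocalRing.maximalIdeal_le_jacobson _)
  obtain ⟨P, hP, -⟩ := Ideal.exists_minimalPrimes_le (I := (⊥ : Ideal T)) (J := maximalIdeal T) bot_le
  have := hP.1.1
  have h3 : maximalIdeal T ≤ P := by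
    apply Ideal.IsPrime.le_of_pow_le (n := n)
    rw [h2]; exact bot_le
  have h4 : P = maximalIdeal T := le_antisymm (IsLocalRing.le_maximalIdeal hP.1.1.ne_top) h3
  rw [← h4, Ideal.height_eq_zero_iff.2 hP] at hdim
  exact lt_irrefl _ hdim

lemma uncountable_of_height (hdim : 0 < (maximalIdeal T).height) : ℵ₀ < #T := by
  by_contra hcon
  rw [not_lt, Cardinal.mk_le_aleph0_iff] at hcon
  obtain ⟨f, hf⟩ := exists_surjective_nat T
  choose a ha ha' using max_pow_ne hdim
  classical
  let x : ℕ → T := fun n => Nat.rec 0 (fun n y => if y - f n ∈ maximalIdeal T ^ (n + 1) then y + a n else y) n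
  have hx : ∀ n, x (n + 1) = if x n - f n ∈ maximalIdeal T ^ (n + 1) then x n + a n else x n :=
    fun n => rfl
  have h1 : ∀ n, x (n + 1) - x n ∈ maximalIdeal T ^ n := by
    intro n
    rw [hx]
    split_ifs
    · simpa using ha n
    · simp
  have h2 : ∀ n, x (n + 1) - f n ∉ maximalIdeal T ^ (n + 1) := by
    intro n
    rw [hx]
    split_ifs with h
    · intro h'
      apply ha' n
      have := (maximalIdeal T ^ (n+1)).sub_mem h' h
      simpa using this
    · exact h
  have h3 : ∀ m k, x (m + k) - x m ∈ maximalIdeal T ^ m := by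
    intro m k
    induction k with
    | zero => simp
    | succ k ih =>
      have := (maximalIdeal T ^ m).add_mem (Ideal.pow_le_pow_right (Nat.le_add_right m k) (h1 (m + k))) ih
      simpa [add_assoc] using this
  obtain ⟨L, hL⟩ := IsPrecomplete.prec (I := maximalIdeal T) (M := T) inferInstance (f := x) (by
    intro m n hmn
    obtain ⟨k, rfl⟩ := Nat.exists_eq_add_of_le hmn
    rw [SModEq.sub_mem, smul_eq_mul, Ideal.mul_top]
    rw [← neg_sub]
    exact neg_mem (h3 m k))
  obtain ⟨n, hn⟩ := hf L
  have := hL (n + 1)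
  rw [SModEq.sub_mem, smul_eq_mul, Ideal.mul_top, ← hn] at this
  exact h2 n this

end Uncountable

end

section

section Completion
variable {T : Type u} [CommRing T] [IsLocalRing T] [IsNoetherianRing T]

/-- the properties of the subring `A` of `T` ensuring that `T` is its completion -/
structure DenseSub (A : Subring T) : Prop where
  unit : ∀ r ∈ A, ∀ s, r * s = 1 → s ∈ A
  onto : ∀ (n : ℕ) (u : T), ∃ x ∈ A, x - u ∈ maximalIdeal T ^ n
  closed : ∀ (l : List T) (c : T), (∀ a ∈ l, a ∈ A) → c ∈ A → c ∈ Ideal.span {a | a ∈ l} →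
    c ∈ Submodule.span A {a | a ∈ l}

variable {A : Subring T}

lemma DenseSub.comap_map (h : DenseSub A) (J : Ideal A) : (J.map A.subtype).comap A.subtype = J := by
  refine le_antisymm ?_ Ideal.le_comap_map
  intro c hc
  rw [Ideal.mem_comap, Ideal.map] at hc
  obtain ⟨S, hS, hcS⟩ := Submodule.mem_span_finite_of_mem_span hc
  have h1 : {a | a ∈ S.toList} = (S : Set T) := by ext; simp
  have h2 := h.closed S.toList (c : T) (by
    intro a ha
    rw [Finset.mem_toList] at ha
    obtain ⟨b, -, rfl⟩ := hS ha
    exact b.2) c.2 (by rw [h1]; exact hcS)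
  rw [h1] at h2
  have h3 : Submodule.span A (S : Set T) ≤ Submodule.map (Algebra.linearMap A T) J := by
    rw [Submodule.span_le]
    intro a ha
    obtain ⟨b, hb, rfl⟩ := hS ha
    exact ⟨b, hb, rfl⟩
  obtain ⟨b, hb, hbc⟩ := h3 h2
  have : b = c := Subtype.ext hbc
  rwa [← this]

lemma DenseSub.isNoetherianRing (h : DenseSub A) : IsNoetherianRing A := by
  have hs : StrictMono (fun J : Ideal A => J.map A.subtype) := by
    refine Monotone.strictMono_of_injective (fun I J hIJ => Ideal.map_mono hIJ) ?_
    intro I J hIJ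
    have := congrArg (Ideal.comap A.subtype) hIJ
    simpa only [h.comap_map] using this
  rw [isNoetherianRing_iff, isNoetherian_iff']
  exact hs.wellFoundedGT

lemma DenseSub.isUnit_iff (h : DenseSub A) (a : A) : IsUnit (a : T) ↔ IsUnit a := by
  refine ⟨fun ha => ?_, fun ha => ha.map A.subtype⟩
  obtain ⟨s, hs⟩ := ha.exists_right_inv
  exact IsUnit.of_mul_eq_one ⟨s, h.unit a a.2 s hs⟩ (Subtype.ext hs)

lemma DenseSub.isLocalRing (h : DenseSub A) : IsLocalRing A := by
  have : Nontrivial A := inferInstance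
  refine IsLocalRing.of_nonunits_add ?_
  intro a b ha hb
  rw [mem_nonunits_iff, ← h.isUnit_iff] at ha hb ⊢
  exact (nonunits_add ha hb : ((a : T) + b) ∈ nonunits T)

lemma DenseSub.maximalIdeal_eq (h : DenseSub A) [IsLocalRing A] :
    maximalIdeal A = (maximalIdeal T).comap A.subtype := by
  ext a
  rw [Ideal.mem_comap, mem_maximalIdeal, mem_maximalIdeal, mem_nonunits_iff, mem_nonunits_iff,
    ← h.isUnit_iff]
  rfl

lemma DenseSub.map_max (h : DenseSub A) [IsLocalRing A] :
    (maximalIdeal A).map A.subtype = maximalIdeal T := by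
  refine le_antisymm ?_ ?_
  · rw [h.maximalIdeal_eq]; exact Ideal.map_comap_le
  · refine Submodule.le_of_le_smul_of_le_jacobson_bot (I := maximalIdeal T)
      (IsNoetherian.noetherian _) (IsLocalRing.maximalIdeal_le_jacobson _) ?_
    intro y hy
    obtain ⟨x, hx, hxy⟩ := h.onto 2 y
    have hxm : x ∈ maximalIdeal T := by
      have := (maximalIdeal T).add_mem (Ideal.pow_le_self two_ne_zero hxy) hy
      simpa using this
    have h1 : y = x + (-(x - y)) := by ring
    rw [h1]
    refine Submodule.add_mem_sup ?_ ?_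
    · refine Ideal.mem_map_of_mem A.subtype (x := ⟨x, hx⟩) ?_
      rw [h.maximalIdeal_eq]; exact hxm
    · rw [smul_eq_mul, ← pow_two]; exact neg_mem hxy

lemma DenseSub.comap_pow (h : DenseSub A) [IsLocalRing A] (n : ℕ) :
    (maximalIdeal T ^ n).comap A.subtype = maximalIdeal A ^ n := by
  rw [← h.map_max, ← Ideal.map_pow, h.comap_map]

variable [IsAdicComplete (maximalIdeal T) T]

/-- the level maps -/
noncomputable def DenseSub.level (h : DenseSub A) [IsLocalRing A] (n : ℕ) :
    AdicCompletion (maximalIdeal A) A →+* T ⧸ maximalIdeal T ^ n :=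
  (Ideal.quotientMap (maximalIdeal T ^ n) A.subtype (h.comap_pow n).ge).comp
    (AdicCompletion.evalₐ (maximalIdeal A) n).toRingHom

lemma DenseSub.level_mk (h : DenseSub A) [IsLocalRing A] (n : ℕ)
    (x : AdicCompletion.AdicCauchySequence (maximalIdeal A) A) :
    h.level n (AdicCompletion.mk _ _ x) = Ideal.Quotient.mk _ ((x n : A) : T) := by
  simp [DenseSub.level]

lemma DenseSub.level_of (h : DenseSub A) [IsLocalRing A] (n : ℕ) (x : A) :
    h.level n (algebraMap A _ x) = Ideal.Quotient.mk _ (x : T) := by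
  simp [DenseSub.level]

lemma DenseSub.level_compat (h : DenseSub A) [IsLocalRing A] {m n : ℕ} (hle : m ≤ n) :
    (Ideal.Quotient.factorPow (maximalIdeal T) hle).comp (h.level n) = h.level m := by
  ext x
  obtain ⟨x, rfl⟩ := AdicCompletion.mk_surjective _ _ x
  rw [RingHom.comp_apply, h.level_mk, h.level_mk]
  have := x.2 hle
  rw [SModEq.sub_mem, smul_eq_mul, Ideal.mul_top, ← h.comap_pow, Ideal.mem_comap] at this
  have h2 : Ideal.Quotient.mk (maximalIdeal T ^ m) ((x m : A) : T) =
      Ideal.Quotient.mk (maximalIdeal T ^ m) ((x n : A) : T) := by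
    rw [Ideal.Quotient.eq]
    exact this
  rw [h2]
  rfl

/-- the map from the completion of `A` to `T` -/
noncomputable def DenseSub.toT (h : DenseSub A) [IsLocalRing A] :
    AdicCompletion (maximalIdeal A) A →+* T :=
  IsAdicComplete.liftRingHom (maximalIdeal T) h.level (fun hle => h.level_compat hle)

lemma DenseSub.mk_toT (h : DenseSub A) [IsLocalRing A] (n : ℕ) (x : AdicCompletion (maximalIdeal A) A) :
    Ideal.Quotient.mk (maximalIdeal T ^ n) (h.toT x) = h.level n x :=
  IsAdicComplete.mk_liftRingHom _ _ _ n x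

lemma eq_of_mk_eq {x y : T} (h : ∀ n, Ideal.Quotient.mk (maximalIdeal T ^ n) x =
    Ideal.Quotient.mk (maximalIdeal T ^ n) y) : x = y := by
  rw [IsHausdorff.eq_iff_smodEq (I := maximalIdeal T)]
  intro n
  rw [SModEq.sub_mem, smul_eq_mul, Ideal.mul_top]
  exact Ideal.Quotient.eq.1 (h n)

lemma DenseSub.toT_bij (h : DenseSub A) [IsLocalRing A] : Function.Bijective h.toT := by
  constructor
  · rw [injective_iff_map_eq_zero]
    intro x hx
    obtain ⟨x, rfl⟩ := AdicCompletion.mk_surjective _ _ x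
    apply AdicCompletion.ext_evalₐ
    intro n
    have h1 := h.mk_toT n (AdicCompletion.mk _ _ x)
    rw [hx, map_zero, h.level_mk, eq_comm, Ideal.Quotient.eq_zero_iff_mem] at h1
    rw [map_zero, AdicCompletion.evalₐ_mk, Ideal.Quotient.eq_zero_iff_mem, ← h.comap_pow]
    exact h1
  · intro u
    choose a ha hau using fun n => h.onto n u
    let x : AdicCompletion.AdicCauchySequence (maximalIdeal A) A :=
      AdicCompletion.AdicCauchySequence.mk _ _ (fun n => ⟨a n, ha n⟩) (by
        intro n
        rw [SModEq.sub_mem, smul_eq_mul, Ideal.mul_top, ← h.comap_pow, Ideal.mem_comap]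
        have := (maximalIdeal T ^ n).sub_mem (hau n)
          (Ideal.pow_le_pow_right (Nat.le_succ n) (hau (n + 1)))
        simpa using this)
    refine ⟨AdicCompletion.mk _ _ x, eq_of_mk_eq fun n => ?_⟩
    rw [h.mk_toT, h.level_mk, Ideal.Quotient.eq]
    exact hau n

/-- the resulting local UFD with completion `T` -/
noncomputable def DenseSub.toX (h : DenseSub A) (hD : IsDomain A) (hU : UniqueFactorizationMonoid A) :
    LocalUFDWithCompletion T :=
  letI := h.isNoetherianRing
  letI := h.isLocalRing
  { A := A
    toCompletion := A.subtype
    completionEquiv := RingEquiv.ofBijective h.toT h.toT_bij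
    completionEquiv_comp := by
      intro a
      refine eq_of_mk_eq fun n => ?_
      rw [RingEquiv.ofBijective_apply, h.mk_toT, h.level_of]
      rfl }

end Completion

end

section

section Heights2
variable {T : Type u} [CommRing T]

lemma idealHt_eq_height (P : Ideal T) [hP : P.IsPrime] : idealHt P = P.height := by
  have h : P.height = Order.height (⟨P, hP⟩ : PrimeSpectrum T) :=
    PrimeSpectrum.height_eq_orderHeight ⟨P, hP⟩
  rw [h]
  refine le_antisymm ?_ ?_
  · exact iInf₂_le (⟨P, hP⟩ : PrimeSpectrum T) le_rfl
  · exact le_iInf₂ fun Q hQ => Order.height_mono (show (⟨P, hP⟩ : PrimeSpectrum T) ≤ Q from hQ)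

lemma le_krullDim_subtype (F : PrimeSpectrum T → Prop) (s : LTSeries (PrimeSpectrum T))
    (hs : ∀ i, F (s i)) : (s.length : WithBot ℕ∞) ≤ Order.krullDim {Q : PrimeSpectrum T // F Q} := by
  let s' : LTSeries {Q : PrimeSpectrum T // F Q} :=
    { length := s.length
      toFun := fun i => ⟨s i, hs i⟩
      step := fun i => s.step i }
  exact Order.LTSeries.length_le_krullDim s'

lemma alphaAt_eq (X : LocalUFDWithCompletion T) (p : Ideal X.A) (hp : p.IsPrime) :
    alphaAt X p hp =
      Order.krullDim {Q : PrimeSpectrum T // Q.asIdeal.comap X.toCompletion = p} := by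
  letI := X.toCompletion.toAlgebra
  haveI := hp
  have e1 : alphaAt X p hp = ringKrullDim (TensorProduct X.A T p.ResidueField) := rfl
  rw [e1, ringKrullDim_eq_of_ringEquiv (Algebra.TensorProduct.comm X.A T p.ResidueField).toRingEquiv]
  have e2 := Order.krullDim_eq_of_orderIso (PrimeSpectrum.preimageOrderIsoFiber X.A T ⟨p, hp⟩)
  refine Eq.trans e2.symm ?_
  refine Order.krullDim_eq_of_orderIso ?_
  exact
    { toFun := fun Q => ⟨Q.1, congrArg PrimeSpectrum.asIdeal Q.2⟩
      invFun := fun Q => ⟨Q.1, PrimeSpectrum.ext Q.2⟩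
      left_inv := fun _ => rfl
      right_inv := fun _ => rfl
      map_rel_iff' := Iff.rfl }

lemma height_one_eq {A : Type u} [CommRing A] [IsDomain A] [IsNoetherianRing A]
    [UniqueFactorizationMonoid A] (p : Ideal A) [hp : p.IsPrime] (h : p.height = 1) :
    ∃ z : A, Prime z ∧ p = Ideal.span {z} := by
  have hne : p ≠ ⊥ := by
    rintro rfl
    rw [Ideal.height_bot] at h
    exact zero_ne_one h
  obtain ⟨z, hz, hz'⟩ := hp.exists_mem_prime_of_ne_bot hne
  have hzp : (Ideal.span {z}).IsPrime := (Ideal.span_singleton_prime hz'.ne_zero).2 hz'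
  refine ⟨z, hz', ?_⟩
  have hle : Ideal.span {z} ≤ p := (Ideal.span_singleton_le_iff_mem _).2 hz
  symm
  refine Ideal.eq_of_le_of_height_le _ hle ?_
  rw [h]
  exact Ideal.one_le_height_span_singleton_of_mem_nonZeroDivisors
    (mem_nonZeroDivisors_of_ne_zero hz'.ne_zero)

end Heights2

section Fibers
variable {T : Type u} [CommRing T] [IsLocalRing T] [IsNoetherianRing T]
variable {Q0 : Ideal T} {d t : ℕ} {A : Subring T} {CA : Set (Ideal T)}

/-- the coset property of the final ring -/
def CosetProp (Q0 : Ideal T) (d : ℕ) (A : Subring T) (CA : Set (Ideal T)) : Prop :=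
  ∀ a ∈ A, ∀ (u : T) (J : Ideal T), (∀ P ∈ CA, ¬ J ≤ P) →
    ∃ (R : Subring T) (C : Set (Ideal T)), Good Q0 d R C ∧ R ≤ A ∧ a ∈ R ∧
      ∃ x ∈ A, x - u ∈ J ∧ ∀ P ∈ C, x ∉ P

lemma fiber_zero_le (hG : Good Q0 d A CA) (hc : CosetProp Q0 d A CA) (hQ0 : Q0.height = t)
    (hdt : d - 1 ≤ t) (hd1 : 1 ≤ d)
    (hAss : ∀ P ∈ associatedPrimes T T, P.height ≤ ((d - 1 : ℕ) : ℕ∞)) (Q : Ideal T)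
    [hQ : Q.IsPrime] (h0 : ∀ a ∈ A, a ∈ Q → a = 0) : Q.height ≤ t := by
  by_contra hcon
  rw [not_le] at hcon
  have hdtE : ((d - 1 : ℕ) : ℕ∞) ≤ t := by exact_mod_cast hdt
  obtain ⟨R, C, hR, hRA, -, x, hx, hxQ, hxC⟩ := hc 0 (zero_mem _) 0 Q (by
    intro P hP hle
    have hPp := hG.prime P hP
    rcases hG.bound P hP with h | h | ⟨h, r, hr, hr0, hrP⟩
    · exact absurd ((Ideal.height_mono hle).trans ((hAss P h).trans hdtE)) (not_le.2 hcon)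
    · subst h
      exact absurd ((Ideal.height_mono hle).trans hQ0.le) (not_le.2 hcon)
    · have h1 : (d : ℕ∞) ≤ Q.height := by
        have h2 : ((t : ℕ∞) + 1) ≤ Q.height := Order.add_one_le_of_lt hcon
        refine le_trans ?_ h2
        have : d ≤ t + 1 := by omega
        exact_mod_cast this
      have h3 := Ideal.eq_of_le_of_height_le Q hle (h.trans h1)
      subst h3
      exact hr0 (h0 r hr hrP))
  rw [sub_zero] at hxQ
  exact hxC Q0 hR.q0 (by rw [h0 x hx hxQ]; exact zero_mem _)

lemma fiber_one_le (hG : Good Q0 d A CA) (hc : CosetProp Q0 d A CA) (z : A) (hz : Prime z)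
    (Q : Ideal T) [hQ : Q.IsPrime] (hzQ : (z : T) ∈ Q) (h0 : ∀ a : A, (a : T) ∈ Q → z ∣ a) :
    Q.height ≤ d := by
  by_contra hcon
  rw [not_le] at hcon
  obtain ⟨R, C, hR, hRA, hzR, x, hx, hxQ, hxC⟩ := hc z z.2 0 Q (by
    intro P hP hle
    have hPp := hG.prime P hP
    rcases hG.bound P hP with h | h | ⟨h, -⟩
    · exact not_mem_ass_of_regular (hG.coe_reg hz.ne_zero) h (hle hzQ)
    · subst h
      exact hz.ne_zero (Subtype.ext (hG.zero z z.2 (hle hzQ)))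
    · exact absurd ((Ideal.height_mono hle).trans h) (not_le.2 hcon))
  rw [sub_zero] at hxQ
  have h1 := coe_dvd_of_dvd (h0 ⟨x, hx⟩ hxQ)
  have hRD := hR.isDomain
  have hRU := hR.ufd
  obtain ⟨w, hw, hwz⟩ := WfDvdMonoid.exists_irreducible_factor (a := (⟨z, hzR⟩ : R)) (by
    intro hu
    exact hG.not_isUnit hz.not_isUnit (hu.map R.subtype))
    (fun h => hz.ne_zero (Subtype.ext (congrArg Subtype.val h :)))
  obtain ⟨P, hPC, hP⟩ := hR.exists_assDiv hw.prime
  have h2 : (w : T) ∣ z := coe_dvd_of_dvd hwz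
  exact hxC P hPC (P.mem_of_dvd (h2.trans h1) hP.mem)

lemma fiber_zero_dim (hG : Good Q0 d A CA) (hc : CosetProp Q0 d A CA) (hQ0 : Q0.height = t)
    (hdt : d - 1 ≤ t) (hd1 : 1 ≤ d)
    (hAss : ∀ P ∈ associatedPrimes T T, P.height ≤ ((d - 1 : ℕ) : ℕ∞)) :
    Order.krullDim {Q : PrimeSpectrum T // Q.asIdeal.comap A.subtype = ⊥} = (t : WithBot ℕ∞) := by
  refine le_antisymm ?_ ?_
  · refine iSup_le fun s => ?_
    let s' : LTSeries (PrimeSpectrum T) := s.map Subtype.val (fun _ _ h => h)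
    have h1 : (s.length : ℕ∞) ≤ Order.height s'.last := Order.length_le_height_last (p := s')
    have h2 := fiber_zero_le hG hc hQ0 hdt hd1 hAss s.last.1.asIdeal (by
      intro a ha haQ
      have h3 : (⟨a, ha⟩ : A) ∈ s.last.1.asIdeal.comap A.subtype := haQ
      rw [s.last.2, Ideal.mem_bot] at h3
      exact congrArg Subtype.val h3)
    rw [PrimeSpectrum.height_eq_orderHeight] at h2
    have h3 : s'.last = s.last.1 := rfl
    rw [h3] at h1
    exact_mod_cast h1.trans h2
  · have hp := hG.prime Q0 hG.q0
    have h1 : (t : ℕ∞) ≤ Order.height (⟨Q0, hp⟩ : PrimeSpectrum T) := by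
      rw [← PrimeSpectrum.height_eq_orderHeight]
      exact hQ0.ge
    obtain ⟨s, hs, hl⟩ := Order.exists_series_of_le_height _ h1
    rw [← hl]
    refine le_krullDim_subtype (fun Q : PrimeSpectrum T => Q.asIdeal.comap A.subtype = ⊥) s ?_
    intro i
    rw [eq_bot_iff]
    intro a ha
    have h2 : (s i).asIdeal ≤ Q0 := by
      have : s i ≤ s.last := LTSeries.monotone s (Fin.le_last i)
      rw [hs] at this
      exact this
    exact Subtype.ext (hG.zero a a.2 (h2 ha))

lemma fiber_one_dim (hG : Good Q0 d A CA) (hc : CosetProp Q0 d A CA)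
    (hd1 : 1 ≤ d) (z : A) (hz : Prime z) :
    Order.krullDim {Q : PrimeSpectrum T // Q.asIdeal.comap A.subtype = Ideal.span {z}} =
      ((d - 1 : ℕ) : WithBot ℕ∞) := by
  refine le_antisymm ?_ ?_
  · refine iSup_le fun s => ?_
    let s' : LTSeries (PrimeSpectrum T) := s.map Subtype.val (fun _ _ h => h)
    have hmem : ∀ Q : {Q : PrimeSpectrum T // Q.asIdeal.comap A.subtype = Ideal.span {z}},
        (z : T) ∈ Q.1.asIdeal := by
      intro Q
      have : z ∈ Q.1.asIdeal.comap A.subtype := by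
        rw [Q.2]; exact Ideal.mem_span_singleton_self z
      exact this
    obtain ⟨P, hP, hPle⟩ := Ideal.exists_minimalPrimes_le (I := (⊥ : Ideal T))
      (J := s.head.1.asIdeal) bot_le
    have hlt : (⟨P, hP.1.1⟩ : PrimeSpectrum T) < s'.head := by
      refine lt_of_le_of_ne hPle ?_
      intro h
      have h1 : (z : T) ∈ P := by
        have h2 : P = s.head.1.asIdeal := congrArg PrimeSpectrum.asIdeal h
        rw [h2]
        exact hmem _
      exact Set.disjoint_left.1 (Ideal.disjoint_nonZeroDivisors_of_mem_minimalPrimes hP) h1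
          (hG.coe_reg hz.ne_zero)
    have h1 := Order.length_le_height_last (p := RelSeries.cons s' ⟨P, hP.1.1⟩ hlt)
    have h2 := fiber_one_le hG hc z hz s.last.1.asIdeal (hmem _) (by
      intro a haQ
      have h3 : a ∈ s.last.1.asIdeal.comap A.subtype := haQ
      rwa [s.last.2, Ideal.mem_span_singleton] at h3)
    rw [PrimeSpectrum.height_eq_orderHeight] at h2
    have h3 : s'.last = s.last.1 := rfl
    rw [RelSeries.last_cons, RelSeries.cons_length, h3] at h1
    have h4 : s.length + 1 ≤ d := by exact_mod_cast h1.trans h2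
    have h5 : s.length ≤ d - 1 := by omega
    exact_mod_cast h5
  · obtain ⟨Q, hQC, hQd, hzQ⟩ := hG.qz z hz
    have hQp := hG.prime Q hQC
    have h1 := Ideal.height_le_height_add_one_of_mem hzQ
    have hle : Ideal.span {(z : T)} ≤ Q := (Ideal.span_singleton_le_iff_mem _).2 hzQ
    have hqp : (Q.map (Ideal.Quotient.mk (Ideal.span {(z : T)}))).IsPrime :=
      Ideal.isPrime_map_quotientMk_of_isPrime hle
    have h2 : ((d - 1 : ℕ) : ℕ∞) ≤ Order.height (⟨_, hqp⟩ : PrimeSpectrum (T ⧸ Ideal.span {(z : T)})) := by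
      rw [← PrimeSpectrum.height_eq_orderHeight]
      rw [hQd] at h1
      have h3 : (((d - 1 : ℕ) : ℕ∞) + 1) ≤ (Q.map (Ideal.Quotient.mk (Ideal.span {(z : T)}))).height + 1 := by
        refine le_trans ?_ h1
        have : d - 1 + 1 ≤ d := by omega
        exact_mod_cast this
      exact (ENat.add_le_add_iff_right ENat.one_ne_top).1 h3
    obtain ⟨s, hs, hl⟩ := Order.exists_series_of_le_height _ h2
    let s' : LTSeries (PrimeSpectrum T) := s.map
      (PrimeSpectrum.comap (Ideal.Quotient.mk (Ideal.span {(z : T)})))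
      (Monotone.strictMono_of_injective (fun _ _ h => Ideal.comap_mono h)
        (PrimeSpectrum.comap_injective_of_surjective _ Ideal.Quotient.mk_surjective))
    rw [← hl]
    refine le_krullDim_subtype
      (fun Q : PrimeSpectrum T => Q.asIdeal.comap A.subtype = Ideal.span {z}) s' ?_
    intro i
    have h3 : (s i).asIdeal ≤ Q.map (Ideal.Quotient.mk (Ideal.span {(z : T)})) := by
      have : s i ≤ s.last := LTSeries.monotone s (Fin.le_last i)
      rw [hs] at this
      exact this
    have h4 : (s' i).asIdeal ≤ Q := by
      intro y hy
      have h5 : Ideal.Quotient.mk (Ideal.span {(z : T)}) y ∈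
        Q.map (Ideal.Quotient.mk (Ideal.span {(z : T)})) := h3 hy
      have h6 : y ∈ (Q.map (Ideal.Quotient.mk (Ideal.span {(z : T)}))).comap
        (Ideal.Quotient.mk (Ideal.span {(z : T)})) := h5
      rw [Ideal.comap_map_of_surjective _ Ideal.Quotient.mk_surjective] at h6
      rwa [← RingHom.ker_eq_comap_bot, Ideal.mk_ker, sup_eq_left.2 hle] at h6
    refine le_antisymm ?_ ?_
    · intro a ha
      rw [Ideal.mem_span_singleton]
      exact hG.cut Q hQC z a hz hzQ (h4 ha)
    · rw [Ideal.span_singleton_le_iff_mem, Ideal.mem_comap]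
      show Ideal.Quotient.mk (Ideal.span {(z : T)}) (z : T) ∈ (s i).asIdeal
      rw [Ideal.Quotient.eq_zero_iff_mem.2 (Ideal.mem_span_singleton_self _)]
      exact zero_mem _

end Fibers

end

/-- **Main Theorem.** Let `(T, m)` be a complete local equidimensional ring with
`dim T ≥ 2` and `depth T > 1`, such that no integer of `T` is a zerodivisor and
`|T| = |T/m|`. Let `d`, `t` be integers with `1 ≤ d ≤ dim T − 1`, `0 ≤ t ≤ dim T − 1`
and `d − 1 ≤ t`. Assume `ht p ≤ d − 1` for every `p ∈ Ass T` and that `ht Q ≤ d`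
whenever `z ∈ T` is regular and `Q ∈ Ass(T/zT)`. Then there is a local UFD `A` whose
completion is `T` with `α(A, (0)) = t` and `α(A, p) = d − 1` for every height one prime
ideal `p` of `A`. -/
theorem exists_local_UFD_with_formal_fibers {T : Type u} [CommRing T] [IsLocalRing T]
    [IsNoetherianRing T] [IsAdicComplete (maximalIdeal T) T]
    (hequi : IsEquidim T) (hdim : 2 ≤ ringKrullDim T) (hdepth : DepthGTOne T)
    (hint : ∀ n : ℤ, n ≠ 0 → ((n : ℤ) : T) ∈ nonZeroDivisors T)
    (hcard : #T = #(ResidueField T))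
    (d t : ℕ) (hd1 : 1 ≤ d) (hd2 : (d : WithBot ℕ∞) + 1 ≤ ringKrullDim T)
    (ht2 : (t : WithBot ℕ∞) + 1 ≤ ringKrullDim T) (hdt : d - 1 ≤ t)
    (hAss : ∀ p ∈ associatedPrimes T T, idealHt p ≤ ((d - 1 : ℕ) : ℕ∞))
    (hreg : ∀ z ∈ nonZeroDivisors T, ∀ Q ∈ associatedPrimes T (T ⧸ Ideal.span {z}),
      idealHt Q ≤ (d : ℕ∞)) :
    ∃ X : LocalUFDWithCompletion T,
      alphaAt X ⊥ Ideal.bot_prime = (t : WithBot ℕ∞) ∧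
      ∀ (p : Ideal X.A) (hp : p.IsPrime), idealHt p = 1 →
        alphaAt X p hp = ((d - 1 : ℕ) : WithBot ℕ∞) := by
  rw [← IsLocalRing.maximalIdeal_height_eq_ringKrullDim] at hd2 ht2
  have hd3 : (d : ℕ∞) < (maximalIdeal T).height :=
    (ENat.add_one_le_iff (ENat.coe_ne_top d)).1 (by exact_mod_cast hd2)
  have ht3 : (t : ℕ∞) < (maximalIdeal T).height :=
    (ENat.add_one_le_iff (ENat.coe_ne_top t)).1 (by exact_mod_cast ht2)
  have hAss' : ∀ P ∈ associatedPrimes T T, P.height ≤ ((d - 1 : ℕ) : ℕ∞) := by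
    intro P hP
    have := hP.1
    rw [← idealHt_eq_height]
    exact hAss P hP
  have H : Hyp T d := ⟨hd1, by
    intro z hz P hP
    have hP' := assDiv_iff.1 hP
    have := hP'.1
    rw [← idealHt_eq_height]
    exact hreg z hz P hP', hd3⟩
  have hk : ℵ₀ < #(ResidueField T) := by
    rw [← hcard]
    exact uncountable_of_height (lt_of_le_of_lt zero_le hd3)
  obtain ⟨Q0, hQ0, hQ0h, base, hbase⟩ := exists_base H hint hk ht3
  obtain ⟨A, CA, hG, hc, hcl⟩ := exists_final H hk hcard base hbase
  have hc' : CosetProp Q0 d A CA := hc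
  have hne : ∀ P ∈ CA, P ≠ maximalIdeal T := by
    rintro P hP rfl
    rcases hG.bound _ hP with h | h | ⟨h, -⟩
    · have h1 : ((d - 1 : ℕ) : ℕ∞) ≤ d := by exact_mod_cast Nat.sub_le d 1
      exact absurd ((hAss' _ h).trans h1) (not_le.2 hd3)
    · rw [h, hQ0h] at ht3
      exact lt_irrefl _ ht3
    · exact absurd h (not_le.2 hd3)
  have hD : DenseSub A :=
    { unit := hG.unit
      onto := by
        intro n u
        obtain ⟨R, C, -, -, -, x, hx, hxu, -⟩ := hc' 0 (zero_mem _) u (maximalIdeal T ^ n) (by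
          intro P hP hle
          have hPp := hG.prime P hP
          have h1 : maximalIdeal T ≤ P := Ideal.IsPrime.le_of_pow_le hle
          exact hne P hP (le_antisymm (IsLocalRing.le_maximalIdeal hPp.ne_top) h1))
        exact ⟨x, hx, hxu⟩
      closed := hcl }
  have hdom := hG.isDomain
  have hufd := hG.ufd
  have hnoe := hD.isNoetherianRing
  have key : ∀ p : Ideal A, p.IsPrime → p.height = 1 → ∃ z : A, Prime z ∧ p = Ideal.span {z} :=
    fun p hp h => height_one_eq p (hp := hp) h
  refine ⟨hD.toX hdom hufd, ?_, ?_⟩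
  · rw [alphaAt_eq]
    exact fiber_zero_dim hG hc' hQ0h hdt hd1 hAss'
  · intro p hp hp1
    rw [idealHt_eq_height] at hp1
    obtain ⟨z, hz, hpz⟩ := key p hp hp1
    rw [alphaAt_eq]
    subst hpz
    exact fiber_one_dim hG hc' hd1 z hz
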